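/- arXiv:1810.05707 — 4 statements merged into one kernel-verified Lean document; each statement's English description precedes it below -/
import Mathlib

section
/- Let λ ∈ (0,∞) and let 𝓕 be a family of λ-Lipschitz maps between metric spaces. The following are equivalent: (i) 𝓕 factors the Hamming cubes; (ii) 𝓕 crudely factors the Hamming cubes; (iii) limsup_n a_n(𝓕) > 0; (iv) for each 1 < p < ∞, limsup_n b_{p,n}(𝓕) > 0; (v) for some 1 < p < ∞, limsup_n b_{p,n}(𝓕) > 0. -/
open Finset

noncomputable section

/-- Normalized Hamming distance on the cube `{±1}^n` (modeled as `Fin n → Bool`). -/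
def hdist (n : ℕ) (ε δ : Fin n → Bool) : ℝ :=
  ((Finset.univ.filter fun i => ε i ≠ δ i).card : ℝ) / n

/-- `-ε`: flip all coordinates. -/
def negCube {n : ℕ} (ε : Fin n → Bool) : Fin n → Bool := fun i => !(ε i)

/-- `d_i ε`: flip the `i`-th coordinate. -/
def flipCoord {n : ℕ} (i : Fin n) (ε : Fin n → Bool) : Fin n → Bool :=
  Function.update ε i (!(ε i))

/-- Expectation with respect to the uniform probability measure on the cube. -/
def cubeE (n : ℕ) (Φ : (Fin n → Bool) → ℝ) : ℝ :=
  (∑ ε : Fin n → Bool, Φ ε) / 2 ^ n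

/-- Lipschitz constant of a map from the cube (with metric `hdist`) into a metric space,
with the convention `0 / 0 = 0`. -/
def cubeLip {n : ℕ} {X : Type} [MetricSpace X] (f : (Fin n → Bool) → X) : ℝ :=
  sSup { r : ℝ | ∃ ε δ, r = dist (f ε) (f δ) / hdist n ε δ }

/-- A map between (bundled) metric spaces. -/
structure MetricMap where
  X : Type
  Y : Type
  mX : MetricSpace X
  mY : MetricSpace Y
  F : X → Y

attribute [instance] MetricMap.mX MetricMap.mY

/-- `a_n(𝓕)`: infimum of those `a > 0` such that for each `F : X → Y` in `𝓕` and each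
`f : 2^n → X`, `𝔼 ϱ_Y^f(ε,−ε) ≤ a·Lip(f)`. -/
def aConst (𝓕 : Set MetricMap) (n : ℕ) : ℝ :=
  sInf { a : ℝ | 0 < a ∧ ∀ G ∈ 𝓕, ∀ f : (Fin n → Bool) → G.X,
    cubeE n (fun ε => dist (G.F (f ε)) (G.F (f (negCube ε)))) ≤ a * cubeLip f }

/-- `b_{p,n}(𝓕)`: infimum of those `b > 0` such that for each `F : X → Y` in `𝓕` and each
`f : 2^n → X`, `𝔼 ϱ_Y^f(ε,−ε)^p ≤ b^p n^{p−1} ∑_i 𝔼 ϱ_X^f(ε,d_iε)^p`. -/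
def bConst (𝓕 : Set MetricMap) (p : ℝ) (n : ℕ) : ℝ :=
  sInf { b : ℝ | 0 < b ∧ ∀ G ∈ 𝓕, ∀ f : (Fin n → Bool) → G.X,
    cubeE n (fun ε => dist (G.F (f ε)) (G.F (f (negCube ε))) ^ p)
      ≤ b ^ p * (n : ℝ) ^ (p - 1) *
        ∑ i : Fin n, cubeE n (fun ε => dist (f ε) (f (flipCoord i ε)) ^ p) }

/-- `𝓕` factors the Hamming cubes. -/
def FactorsHammingCubes (𝓕 : Set MetricMap) : Prop :=
  ∃ c : ℝ, 0 < c ∧ ∀ D : ℝ, 1 < D → ∀ n : ℕ, 0 < n →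
    ∃ G ∈ 𝓕, ∃ f : (Fin n → Bool) → G.X, ∃ a b : ℝ, 0 < a ∧ 0 < b ∧ a * c ≤ b ∧
      ∀ ε δ : Fin n → Bool,
        a / D * hdist n ε δ ≤ dist (f ε) (f δ) ∧
        dist (f ε) (f δ) ≤ a * D * hdist n ε δ ∧
        b / D * hdist n ε δ ≤ dist (G.F (f ε)) (G.F (f δ)) ∧
        dist (G.F (f ε)) (G.F (f δ)) ≤ b * D * hdist n ε δ

/-- `𝓕` crudely factors the Hamming cubes. -/
def CrudelyFactorsHammingCubes (𝓕 : Set MetricMap) : Prop :=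
  ∃ c D : ℝ, 0 < c ∧ 0 < D ∧ ∀ n : ℕ, 0 < n →
    ∃ G ∈ 𝓕, ∃ f : (Fin n → Bool) → G.X, ∃ a b : ℝ, 0 < a ∧ 0 < b ∧ a * c ≤ b ∧
      ∀ ε δ : Fin n → Bool,
        a / D * hdist n ε δ ≤ dist (f ε) (f δ) ∧
        dist (f ε) (f δ) ≤ a * D * hdist n ε δ ∧
        b / D * hdist n ε δ ≤ dist (G.F (f ε)) (G.F (f δ)) ∧
        dist (G.F (f ε)) (G.F (f δ)) ≤ b * D * hdist n ε δ

/-!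
The substance is that `limsup b_{p,n} > 0` for one `p > 1` makes `𝓕` factor the Hamming cubes.

For a pseudometric `ϱ` on `2^ι` let `U(ϱ) = |ι|^{p-1} ∑ᵢ 𝔼 ϱ(ε, dᵢε)^p` and `V(ϱ) = 𝔼 ϱ(ε, -ε)^p`.
Convexity of `x ↦ x^p` and the triangle inequality give `V ≤ U`. Strict convexity shows that
`V = U` only for multiples of the Hamming metric, and by compactness of the set of normalized
pseudometrics on a fixed cube, a pseudometric whose defect `U - V` is small relative to `U` is
nearly a multiple of the Hamming metric.

It remains to find `f` on a given `2^N` that is nearly extremal for both `ϱ_X^f` and `ϱ_Y^f`, with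
`U(ϱ_Y) ≥ τ U(ϱ_X)`. If there were none, an inequality
`k (V(ϱ_Y) - τ U(ϱ_X)) ≤ (U - V)(ϱ_X) + (U - V)(ϱ_Y)` with some `k > 0` would hold for every
map of `2^N`. Averaged over copies of `2^N` inside a larger cube whose index set is a product, such
inequalities add up: the intermediate averages on the right telescope while the rates `k` on the
left accumulate. Since the right-hand side is at most `(1 + λ^p) U(ϱ_X)`, in a power of `2^N` this
forces `V(ϱ_Y) ≤ θ U(ϱ_X)` for any prescribed `θ > τ`. Grouping the coordinates of a cube of
arbitrary large dimension into blocks of nearly equal size transfers this bound, up to the factor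
`2^{p-1}`, to that cube, which for small `θ` contradicts `limsup b_{p,n} > 0`.
-/

namespace HammingCube

open Function
open scoped BigOperators

/-! ### Power inequalities -/

section PowerInequalities

variable {p a b x y z : ℝ}

lemma rpow_div_rpow_sub_one (hx : 0 ≤ x) (ha : 0 < a) :
    x ^ p / a ^ (p - 1) = a * (x / a) ^ p := by
  rw [Real.div_rpow hx ha.le, Real.rpow_sub_one ha.ne']
  field_simp

lemma add_div_add_eq_weighted_sum (ha : 0 < a) (hb : 0 < b) :
    (x + y) / (a + b) = (a / (a + b)) • (x / a) + (b / (a + b)) • (y / b) := by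
  simp only [smul_eq_mul]
  field_simp

lemma add_mul_weighted_sum (ha : 0 < a) (hb : 0 < b) :
    (a + b) * ((a / (a + b)) • x + (b / (a + b)) • y) = a * x + b * y := by
  simp only [smul_eq_mul]
  field_simp

lemma add_rpow_div_add_rpow_le (hp : 1 ≤ p) (ha : 0 < a) (hb : 0 < b) (hx : 0 ≤ x) (hy : 0 ≤ y) :
    (x + y) ^ p / (a + b) ^ (p - 1) ≤ x ^ p / a ^ (p - 1) + y ^ p / b ^ (p - 1) := by
  have hconv := (convexOn_rpow hp).2 (Set.mem_Ici.2 (div_nonneg hx ha.le))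
    (Set.mem_Ici.2 (div_nonneg hy hb.le)) (by positivity : 0 ≤ a / (a + b))
    (by positivity : 0 ≤ b / (a + b)) (by field_simp)
  rw [← add_div_add_eq_weighted_sum ha hb] at hconv
  rw [rpow_div_rpow_sub_one (add_nonneg hx hy) (add_pos ha hb), rpow_div_rpow_sub_one hx ha,
    rpow_div_rpow_sub_one hy hb, ← add_mul_weighted_sum ha hb]
  gcongr

lemma add_rpow_div_add_rpow_lt (hp : 1 < p) (ha : 0 < a) (hb : 0 < b) (hx : 0 ≤ x) (hy : 0 ≤ y)
    (hne : x / a ≠ y / b) :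
    (x + y) ^ p / (a + b) ^ (p - 1) < x ^ p / a ^ (p - 1) + y ^ p / b ^ (p - 1) := by
  have hconv := (strictConvexOn_rpow hp).2 (Set.mem_Ici.2 (div_nonneg hx ha.le))
    (Set.mem_Ici.2 (div_nonneg hy hb.le)) hne (by positivity : 0 < a / (a + b))
    (by positivity : 0 < b / (a + b)) (by field_simp)
  rw [← add_div_add_eq_weighted_sum ha hb] at hconv
  rw [rpow_div_rpow_sub_one (add_nonneg hx hy) (add_pos ha hb), rpow_div_rpow_sub_one hx ha,
    rpow_div_rpow_sub_one hy hb, ← add_mul_weighted_sum ha hb]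
  gcongr

lemma add_mul_eq_mul_of_rpow_div_le (hp : 1 < p) (ha : 0 < a) (hb : 0 < b) (hx : 0 ≤ x)
    (hy : 0 ≤ y) (hz : 0 ≤ z) (hzxy : z ≤ x + y)
    (h : x ^ p / a ^ (p - 1) + y ^ p / b ^ (p - 1) ≤ z ^ p / (a + b) ^ (p - 1)) :
    (a + b) * x = a * z := by
  have hp0 : 0 < p := one_pos.trans hp
  have hzp : z ^ p / (a + b) ^ (p - 1) ≤ (x + y) ^ p / (a + b) ^ (p - 1) := by gcongr
  have hratio : x / a = y / b := by
    by_contra hne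
    exact (add_rpow_div_add_rpow_lt hp ha hb hx hy hne).not_ge (h.trans hzp)
  have hsum : x + y ≤ z := by
    have := (add_rpow_div_add_rpow_le hp.le ha hb hx hy).trans h
    rwa [div_le_div_iff_of_pos_right (by positivity),
      Real.rpow_le_rpow_iff (add_nonneg hx hy) hz hp0] at this
  rw [div_eq_div_iff ha.ne' hb.ne'] at hratio
  rw [hzxy.antisymm hsum]
  linear_combination hratio

lemma expect_rpow_le {α : Type*} {s : Finset α} {Φ : α → ℝ} (hp : 1 ≤ p)
    (hΦ : ∀ i ∈ s, 0 ≤ Φ i) : (𝔼 i ∈ s, Φ i) ^ p ≤ 𝔼 i ∈ s, Φ i ^ p := by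
  rcases s.eq_empty_or_nonempty with rfl | hs
  · simp [Real.zero_rpow (by linarith : p ≠ 0)]
  have hcard : (#s : ℝ) ≠ 0 := by simpa using hs.ne_empty
  have := Real.rpow_arith_mean_le_arith_mean_rpow s (fun _ => (#s : ℝ)⁻¹) Φ
    (fun _ _ => by positivity) (by simp [hcard]) hΦ hp
  simpa only [expect_eq_sum_div_card, ← Finset.mul_sum, div_eq_inv_mul] using this

end PowerInequalities

/-! ### Pseudometrics -/

/-- Pseudometrics as a predicate on functions, so that the pseudometrics on a finite set form a
closed subset of a function space, where compactness is available. -/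
structure IsPseudometric {α : Type*} (ϱ : α → α → ℝ) : Prop where
  self_eq_zero : ∀ x, ϱ x x = 0
  symm : ∀ x y, ϱ x y = ϱ y x
  triangle : ∀ x y z, ϱ x z ≤ ϱ x y + ϱ y z

namespace IsPseudometric

variable {α β : Type*} {ϱ : α → α → ℝ}

lemma nonneg (h : IsPseudometric ϱ) (x y : α) : 0 ≤ ϱ x y := by
  linarith [h.triangle x y x, h.self_eq_zero x, h.symm x y]

lemma onFun (h : IsPseudometric ϱ) (f : β → α) : IsPseudometric (ϱ on f) :=
  ⟨fun _ => h.self_eq_zero _, fun _ _ => h.symm _ _, fun _ _ _ => h.triangle _ _ _⟩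

lemma const_mul (h : IsPseudometric ϱ) {c : ℝ} (hc : 0 ≤ c) :
    IsPseudometric fun x y => c * ϱ x y where
  self_eq_zero x := by rw [h.self_eq_zero, mul_zero]
  symm x y := by rw [h.symm]
  triangle x y z := by
    rw [← mul_add]
    exact mul_le_mul_of_nonneg_left (h.triangle x y z) hc

end IsPseudometric

lemma isPseudometric_dist {α : Type*} [PseudoMetricSpace α] :
    IsPseudometric (dist : α → α → ℝ) :=
  ⟨dist_self, dist_comm, dist_triangle⟩

lemma isClosed_setOf_isPseudometric {α : Type*} :
    IsClosed {ϱ : α → α → ℝ | IsPseudometric ϱ} := by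
  have : {ϱ : α → α → ℝ | IsPseudometric ϱ} = {ϱ | (∀ x, ϱ x x = 0) ∧
      (∀ x y, ϱ x y = ϱ y x) ∧ ∀ x y z, ϱ x z ≤ ϱ x y + ϱ y z} :=
    Set.ext fun _ => ⟨fun ⟨h₀, h₁, h₂⟩ => ⟨h₀, h₁, h₂⟩, fun ⟨h₀, h₁, h₂⟩ => ⟨h₀, h₁, h₂⟩⟩
  rw [this]
  simp only [Set.ofPred_and, Set.ofPred_forall]
  refine .inter (isClosed_iInter fun x => ?_) (.inter
    (isClosed_iInter fun x => isClosed_iInter fun y => ?_)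
    (isClosed_iInter fun x => isClosed_iInter fun y => isClosed_iInter fun z => ?_))
  · exact isClosed_eq (by fun_prop) (by fun_prop)
  · exact isClosed_eq (by fun_prop) (by fun_prop)
  · exact isClosed_le (by fun_prop) (by fun_prop)

/-! ### The normalized Hamming metric -/

section NormalizedHamming

variable {ι : Type*} [Fintype ι]

/-- The normalized Hamming metric `∂`, for an arbitrary finite index set. -/
def cubeDist (ε δ : ι → Bool) : ℝ := hammingDist ε δ / Fintype.card ι

lemma cubeDist_self (ε : ι → Bool) : cubeDist ε ε = 0 := by simp [cubeDist]

lemma cubeDist_pos {ε δ : ι → Bool} (hne : ε ≠ δ) : 0 < cubeDist ε δ := by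
  have hdist := hammingDist_pos.2 hne
  have hcard := hdist.trans_le (hammingDist_le_card_fintype (x := ε) (y := δ))
  unfold cubeDist
  positivity

/-- `ϱ` is within the factor `D` of `a` times the normalized Hamming metric. -/
def HammingApprox (D a : ℝ) (ϱ : (ι → Bool) → (ι → Bool) → ℝ) : Prop :=
  ∀ ε δ, a / D * cubeDist ε δ ≤ ϱ ε δ ∧ ϱ ε δ ≤ a * D * cubeDist ε δ

lemma isOpen_setOf_between_cubeDist (D : ℝ) :
    IsOpen {ϱ : (ι → Bool) → (ι → Bool) → ℝ |
      ∀ ε δ, ε ≠ δ → cubeDist ε δ / D < ϱ ε δ ∧ ϱ ε δ < D * cubeDist ε δ} := by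
  simp only [Set.ofPred_forall, Set.ofPred_and]
  exact isOpen_iInter_of_finite fun _ => isOpen_iInter_of_finite fun _ =>
    isOpen_iInter_of_finite fun _ =>
      (isOpen_lt (by fun_prop) (by fun_prop)).inter (isOpen_lt (by fun_prop) (by fun_prop))

end NormalizedHamming

/-! ### Flips and their costs -/

section Flips

variable {ι : Type*} [DecidableEq ι]

/-- The point obtained from `ε` by flipping the coordinates in `A`: the maps `d_i` and `ε ↦ -ε`
are the cases `A = {i}` and `A = univ`. -/
def flipOn (A : Finset ι) (ε : ι → Bool) : ι → Bool := fun i => xor (decide (i ∈ A)) (ε i)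

lemma flipOn_empty (ε : ι → Bool) : flipOn ∅ ε = ε := by
  funext i
  simp [flipOn]

lemma flipOn_involutive (A : Finset ι) : Involutive (flipOn A) := fun ε => by
  funext i
  simp [flipOn]

lemma flipOn_union {A B : Finset ι} (h : Disjoint A B) (ε : ι → Bool) :
    flipOn (A ∪ B) ε = flipOn B (flipOn A ε) := by
  funext i
  have hdisj : i ∈ A → i ∉ B := fun hA => Finset.disjoint_left.1 h hA
  by_cases hA : i ∈ A <;> by_cases hB : i ∈ B <;> simp_all [flipOn]

lemma rpow_div_flipOn_union_le {p : ℝ} {ϱ : (ι → Bool) → (ι → Bool) → ℝ} {A B : Finset ι}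
    (hp : 1 ≤ p) (h : IsPseudometric ϱ) (hAB : Disjoint A B) (hA : A.Nonempty) (hB : B.Nonempty)
    (ε : ι → Bool) :
    ϱ ε (flipOn (A ∪ B) ε) ^ p / (#A + #B : ℝ) ^ (p - 1) ≤
      ϱ ε (flipOn A ε) ^ p / (#A : ℝ) ^ (p - 1) +
        ϱ (flipOn A ε) (flipOn B (flipOn A ε)) ^ p / (#B : ℝ) ^ (p - 1) := by
  rw [flipOn_union hAB]
  refine le_trans ?_ (add_rpow_div_add_rpow_le hp (by simpa using hA.card_pos)
    (by simpa using hB.card_pos) (h.nonneg _ _) (h.nonneg _ _))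
  gcongr
  · exact h.nonneg _ _
  · exact h.triangle _ _ _

variable [Fintype ι]

lemma flipOn_filter_ne (ε δ : ι → Bool) : flipOn {i | ε i ≠ δ i} ε = δ := by
  funext i
  cases hε : ε i <;> cases hδ : δ i <;> simp [flipOn, hε, hδ]

lemma expect_comp_flipOn (A : Finset ι) (Φ : (ι → Bool) → ℝ) :
    𝔼 ε, Φ (flipOn A ε) = 𝔼 ε, Φ ε :=
  Fintype.expect_equiv (flipOn_involutive A).toPerm _ _ fun _ => rfl

/-- The mean `p`-th power of the displacement caused by flipping the coordinates in `A`. -/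
def flipCost (p : ℝ) (ϱ : (ι → Bool) → (ι → Bool) → ℝ) (A : Finset ι) : ℝ :=
  𝔼 ε, ϱ ε (flipOn A ε) ^ p

/-- The right-hand side `n^{p-1} ∑ᵢ 𝔼 ϱ(ε, dᵢε)^p` of the inequality defining `b_{p,n}`. -/
def edgeCost (p : ℝ) (ϱ : (ι → Bool) → (ι → Bool) → ℝ) : ℝ :=
  (Fintype.card ι : ℝ) ^ (p - 1) * ∑ i, flipCost p ϱ {i}

/-- The left-hand side `𝔼 ϱ(ε, -ε)^p` of the inequality defining `b_{p,n}`. -/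
def diagCost (p : ℝ) (ϱ : (ι → Bool) → (ι → Bool) → ℝ) : ℝ := flipCost p ϱ univ

variable {p : ℝ} {ϱ σ : (ι → Bool) → (ι → Bool) → ℝ}

lemma flipCost_nonneg (h : IsPseudometric ϱ) (A : Finset ι) : 0 ≤ flipCost p ϱ A :=
  expect_nonneg fun _ _ => Real.rpow_nonneg (h.nonneg _ _) _

lemma edgeCost_nonneg (h : IsPseudometric ϱ) : 0 ≤ edgeCost p ϱ :=
  mul_nonneg (by positivity) (sum_nonneg fun _ _ => flipCost_nonneg h _)

lemma flipCost_empty (hp : p ≠ 0) (h : IsPseudometric ϱ) : flipCost p ϱ ∅ = 0 := by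
  simp [flipCost, flipOn_empty, h.self_eq_zero, Real.zero_rpow hp]

lemma flipCost_const_mul {c : ℝ} (hc : 0 ≤ c) (h : IsPseudometric ϱ) (A : Finset ι) :
    flipCost p (fun ε δ => c * ϱ ε δ) A = c ^ p * flipCost p ϱ A := by
  simp only [flipCost, mul_expect, Real.mul_rpow hc (h.nonneg _ _)]

lemma edgeCost_const_mul {c : ℝ} (hc : 0 ≤ c) (h : IsPseudometric ϱ) :
    edgeCost p (fun ε δ => c * ϱ ε δ) = c ^ p * edgeCost p ϱ := by
  simp only [edgeCost, flipCost_const_mul hc h, ← mul_sum]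
  ring

lemma edgeCost_mono (hp : 0 ≤ p) (hϱ : IsPseudometric ϱ) (h : ∀ ε δ, ϱ ε δ ≤ σ ε δ) :
    edgeCost p ϱ ≤ edgeCost p σ := by
  unfold edgeCost flipCost
  gcongr with i _ ε _
  · exact hϱ.nonneg _ _
  · exact h _ _

lemma edgeCost_le_rpow_mul {c : ℝ} (hp : 0 ≤ p) (hc : 0 ≤ c) (hϱ : IsPseudometric ϱ)
    (hσ : IsPseudometric σ) (h : ∀ ε δ, ϱ ε δ ≤ c * σ ε δ) :
    edgeCost p ϱ ≤ c ^ p * edgeCost p σ :=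
  edgeCost_const_mul (p := p) hc hσ ▸ edgeCost_mono hp hϱ h

/-! ### The type inequality and its equality case -/

lemma expect_flip_flip_rpow_div {a b : ℝ} (ϱ : (ι → Bool) → (ι → Bool) → ℝ) (A B : Finset ι) :
    𝔼 ε, (ϱ ε (flipOn A ε) ^ p / a + ϱ (flipOn A ε) (flipOn B (flipOn A ε)) ^ p / b) =
      flipCost p ϱ A / a + flipCost p ϱ B / b := by
  rw [expect_add_distrib, ← expect_div, ← expect_div,
    expect_comp_flipOn A fun ε => ϱ ε (flipOn B ε) ^ p]
  rfl

lemma flipCost_union_div_le {A B : Finset ι} (hp : 1 ≤ p) (h : IsPseudometric ϱ)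
    (hAB : Disjoint A B) (hA : A.Nonempty) (hB : B.Nonempty) :
    flipCost p ϱ (A ∪ B) / (#(A ∪ B) : ℝ) ^ (p - 1) ≤
      flipCost p ϱ A / (#A : ℝ) ^ (p - 1) + flipCost p ϱ B / (#B : ℝ) ^ (p - 1) := by
  rw [← expect_flip_flip_rpow_div, flipCost, expect_div, card_union_of_disjoint hAB, Nat.cast_add]
  exact expect_le_expect fun ε _ => rpow_div_flipOn_union_le hp h hAB hA hB ε

lemma flipCost_div_le_sum (hp : 1 ≤ p) (h : IsPseudometric ϱ) (A : Finset ι) :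
    flipCost p ϱ A / (#A : ℝ) ^ (p - 1) ≤ ∑ i ∈ A, flipCost p ϱ {i} := by
  induction A using Finset.induction_on with
  | empty => simp [flipCost_empty (by linarith : p ≠ 0) h]
  | insert a A ha ih =>
    rcases A.eq_empty_or_nonempty with rfl | hA
    · simp
    rw [sum_insert ha, insert_eq]
    calc _ ≤ flipCost p ϱ {a} / (#{a} : ℝ) ^ (p - 1) + flipCost p ϱ A / (#A : ℝ) ^ (p - 1) :=
          flipCost_union_div_le hp h (by simpa using ha) (singleton_nonempty a) hA
      _ ≤ _ := by simpa using ih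

lemma flipCost_le_rpow_mul_sum (hp : 1 ≤ p) (h : IsPseudometric ϱ) (A : Finset ι) :
    flipCost p ϱ A ≤ (#A : ℝ) ^ (p - 1) * ∑ i ∈ A, flipCost p ϱ {i} := by
  rcases A.eq_empty_or_nonempty with rfl | hA
  · simp [flipCost_empty (by linarith : p ≠ 0) h]
  have : (0 : ℝ) < #A := by simpa using hA.card_pos
  rw [← div_le_iff₀' (by positivity)]
  exact flipCost_div_le_sum hp h A

lemma flipCost_le_edgeCost (hp : 1 ≤ p) (h : IsPseudometric ϱ) (A : Finset ι) :
    flipCost p ϱ A ≤ edgeCost p ϱ := by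
  refine (flipCost_le_rpow_mul_sum hp h A).trans ?_
  unfold edgeCost
  gcongr
  · exact sum_nonneg fun _ _ => flipCost_nonneg h _
  · exact card_le_univ A
  · exact fun _ _ _ => flipCost_nonneg h _
  · exact subset_univ A

lemma diagCost_le_edgeCost (hp : 1 ≤ p) (h : IsPseudometric ϱ) : diagCost p ϱ ≤ edgeCost p ϱ :=
  flipCost_le_edgeCost hp h univ

/-- The amount by which `ϱ` fails to be extremal in `diagCost_le_edgeCost`. -/
def defect (p : ℝ) (ϱ : (ι → Bool) → (ι → Bool) → ℝ) : ℝ := edgeCost p ϱ - diagCost p ϱ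

lemma defect_nonneg (hp : 1 ≤ p) (h : IsPseudometric ϱ) :
    0 ≤ defect p ϱ :=
  sub_nonneg.2 (diagCost_le_edgeCost hp h)

lemma expect_flip_compl_le_of_diagCost_eq_edgeCost (hp : 1 ≤ p) (h : IsPseudometric ϱ)
    (heq : diagCost p ϱ = edgeCost p ϱ) {A : Finset ι} (hA : A.Nonempty) :
    𝔼 ε, (ϱ ε (flipOn A ε) ^ p / (#A : ℝ) ^ (p - 1) +
        ϱ (flipOn A ε) (flipOn Aᶜ (flipOn A ε)) ^ p / (#Aᶜ : ℝ) ^ (p - 1)) ≤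
      𝔼 ε, ϱ ε (flipOn univ ε) ^ p / (Fintype.card ι : ℝ) ^ (p - 1) := by
  have hcard : (0 : ℝ) < Fintype.card ι := by
    exact_mod_cast hA.card_pos.trans_le (card_le_univ A)
  calc _ = flipCost p ϱ A / (#A : ℝ) ^ (p - 1) + flipCost p ϱ Aᶜ / (#Aᶜ : ℝ) ^ (p - 1) :=
        expect_flip_flip_rpow_div ϱ A Aᶜ
    _ ≤ ∑ i, flipCost p ϱ {i} := by
        rw [← sum_add_sum_compl A]
        exact add_le_add (flipCost_div_le_sum hp h A) (flipCost_div_le_sum hp h Aᶜ)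
    _ = diagCost p ϱ / (Fintype.card ι : ℝ) ^ (p - 1) := by
        rw [heq, edgeCost, mul_div_cancel_left₀ _ (by positivity)]
    _ = _ := expect_div _ _ _

/-- In the equality case the pointwise convexity inequalities are all equalities, so `flipOn A ε`
lies metrically between `ε` and `-ε`, at proportion `#A / n`. -/
lemma card_mul_flipOn_of_diagCost_eq_edgeCost (hp : 1 < p) (h : IsPseudometric ϱ)
    (heq : diagCost p ϱ = edgeCost p ϱ) (A : Finset ι) (ε : ι → Bool) :
    Fintype.card ι * ϱ ε (flipOn A ε) = #A * ϱ ε (flipOn univ ε) := by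
  rcases A.eq_empty_or_nonempty with rfl | hA
  · simp [flipOn_empty, h.self_eq_zero]
  rcases Aᶜ.eq_empty_or_nonempty with hA' | hA'
  · rw [(compl_eq_empty_iff A).1 hA', card_univ]
  have hcard : (#A + #Aᶜ : ℝ) = Fintype.card ι := by exact_mod_cast card_add_card_compl A
  have hle := rpow_div_flipOn_union_le hp.le h disjoint_compl_right hA hA'
  simp only [union_compl, hcard] at hle
  have hpointwise := (expect_flip_compl_le_of_diagCost_eq_edgeCost hp.le h heq hA).not_gt
  have hge : ϱ ε (flipOn A ε) ^ p / (#A : ℝ) ^ (p - 1) +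
      ϱ (flipOn A ε) (flipOn Aᶜ (flipOn A ε)) ^ p / (#Aᶜ : ℝ) ^ (p - 1) ≤
      ϱ ε (flipOn univ ε) ^ p / (Fintype.card ι : ℝ) ^ (p - 1) := by
    by_contra! hlt
    exact hpointwise (expect_lt_expect (fun ε _ => hle ε) ⟨ε, mem_univ ε, hlt⟩)
  have htriangle := h.triangle ε (flipOn A ε) (flipOn univ ε)
  rw [← union_compl A, flipOn_union disjoint_compl_right] at hge htriangle ⊢
  rw [← hcard] at hge ⊢
  exact add_mul_eq_mul_of_rpow_div_le hp (by simpa using hA.card_pos) (by simpa using hA'.card_pos)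
    (h.nonneg _ _) (h.nonneg _ _) (h.nonneg _ _) htriangle hge

lemma card_mul_of_diagCost_eq_edgeCost (hp : 1 < p) (h : IsPseudometric ϱ)
    (heq : diagCost p ϱ = edgeCost p ϱ) (ε δ : ι → Bool) :
    Fintype.card ι * ϱ ε δ = hammingDist ε δ * ϱ ε (flipOn univ ε) := by
  have := card_mul_flipOn_of_diagCost_eq_edgeCost hp h heq {i | ε i ≠ δ i} ε
  rwa [flipOn_filter_ne] at this

lemma diagonal_eq_of_diagCost_eq_edgeCost (hp : 1 < p) (h : IsPseudometric ϱ)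
    (heq : diagCost p ϱ = edgeCost p ϱ) (ε δ : ι → Bool) :
    ϱ ε (flipOn univ ε) = ϱ δ (flipOn univ δ) := by
  rcases eq_or_ne ε δ with rfl | hne
  · rfl
  have hεδ := card_mul_of_diagCost_eq_edgeCost hp h heq ε δ
  rw [h.symm, card_mul_of_diagCost_eq_edgeCost hp h heq δ ε, hammingDist_comm] at hεδ
  exact (mul_left_cancel₀ (Nat.cast_ne_zero.2 (hammingDist_ne_zero.2 hne)) hεδ).symm

theorem eq_edgeCost_mul_cubeDist_of_diagCost_eq_edgeCost (hp : 1 < p) (h : IsPseudometric ϱ)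
    (heq : diagCost p ϱ = edgeCost p ϱ) (ε δ : ι → Bool) :
    ϱ ε δ = edgeCost p ϱ ^ p⁻¹ * cubeDist ε δ := by
  have hroot : edgeCost p ϱ ^ p⁻¹ = ϱ ε (flipOn univ ε) := by
    have hdiag : diagCost p ϱ = ϱ ε (flipOn univ ε) ^ p := by
      simp only [diagCost, flipCost, diagonal_eq_of_diagCost_eq_edgeCost hp h heq _ ε,
        Fintype.expect_const]
    rw [← heq, hdiag, Real.rpow_rpow_inv (h.nonneg _ _) (by linarith)]
  rcases isEmpty_or_nonempty ι with hι | hι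
  · simp [Subsingleton.elim ε δ, h.self_eq_zero, cubeDist]
  rw [hroot, cubeDist, mul_div_assoc', eq_div_iff (by positivity), mul_comm,
    card_mul_of_diagCost_eq_edgeCost hp h heq, mul_comm]

/-! ### Stability of the equality case -/

lemma rpow_le_two_pow_mul_edgeCost (hp : 1 ≤ p) (h : IsPseudometric ϱ) (ε δ : ι → Bool) :
    ϱ ε δ ^ p ≤ 2 ^ Fintype.card ι * edgeCost p ϱ := by
  set A : Finset ι := {i | ε i ≠ δ i}
  calc ϱ ε δ ^ p = ϱ ε (flipOn A ε) ^ p := by rw [flipOn_filter_ne]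
    _ ≤ ∑ η, ϱ η (flipOn A η) ^ p :=
        single_le_sum (f := fun η => ϱ η (flipOn A η) ^ p)
          (fun _ _ => Real.rpow_nonneg (h.nonneg _ _) _) (mem_univ ε)
    _ = 2 ^ Fintype.card ι * flipCost p ϱ A := by
        simp [flipCost, Fintype.expect_eq_sum_div_card, mul_div_cancel₀]
    _ ≤ _ := by gcongr; exact flipCost_le_edgeCost hp h A

lemma continuous_flipCost (hp : 0 ≤ p) (A : Finset ι) :
    Continuous fun ϱ : (ι → Bool) → (ι → Bool) → ℝ => flipCost p ϱ A := by
  simp only [flipCost, Fintype.expect_eq_sum_div_card]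
  exact (continuous_finsetSum _ fun _ _ =>
    Continuous.rpow_const (by fun_prop) fun _ => .inr hp).div_const _

lemma continuous_edgeCost (hp : 0 ≤ p) :
    Continuous fun ϱ : (ι → Bool) → (ι → Bool) → ℝ => edgeCost p ϱ :=
  continuous_const.mul (continuous_finsetSum _ fun _ _ => continuous_flipCost hp _)

lemma isCompact_setOf_edgeCost_eq_one (hp : 1 ≤ p) :
    IsCompact {ϱ : (ι → Bool) → (ι → Bool) → ℝ | IsPseudometric ϱ ∧ edgeCost p ϱ = 1} := by
  have hp₀ : 0 < p := by linarith
  have hclosed :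
      IsClosed {ϱ : (ι → Bool) → (ι → Bool) → ℝ | IsPseudometric ϱ ∧ edgeCost p ϱ = 1} :=
    isClosed_setOf_isPseudometric.inter
      (isClosed_eq (continuous_edgeCost hp₀.le) continuous_const)
  refine (isCompact_Icc (a := 0)
    (b := fun _ _ => (2 ^ Fintype.card ι : ℝ) ^ p⁻¹)).of_isClosed_subset hclosed ?_
  rintro ϱ ⟨hϱ, hone⟩
  refine ⟨hϱ.nonneg, fun ε δ => ?_⟩
  rw [Real.le_rpow_inv_iff_of_pos (hϱ.nonneg _ _) (by positivity) hp₀]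
  simpa [hone] using rpow_le_two_pow_mul_edgeCost hp hϱ ε δ

lemma exists_pos_hammingApprox_one {D : ℝ} (hp : 1 < p) (hD : 1 < D) :
    ∃ m : ℝ, 0 < m ∧ ∀ ϱ : (ι → Bool) → (ι → Bool) → ℝ, IsPseudometric ϱ → edgeCost p ϱ = 1 →
      defect p ϱ < m → HammingApprox D 1 ϱ := by
  have hp₀ : 0 ≤ p := by linarith
  have hdefect : Continuous fun ϱ : (ι → Bool) → (ι → Bool) → ℝ => defect p ϱ :=
    (continuous_edgeCost hp₀).sub (continuous_flipCost hp₀ univ)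
  obtain ⟨m, hm, hmin⟩ := ((isCompact_setOf_edgeCost_eq_one hp.le).diff
    (isOpen_setOf_between_cubeDist (ι := ι) D)).exists_forall_le' hdefect.continuousOn
    (a := 0) fun ϱ hϱ => by
      obtain ⟨⟨hϱ, hone⟩, hfar⟩ := hϱ
      refine (defect_nonneg hp.le hϱ).lt_of_ne fun hzero => hfar ?_
      intro ε δ hne
      have hpos := cubeDist_pos hne
      rw [eq_edgeCost_mul_cubeDist_of_diagCost_eq_edgeCost hp hϱ (sub_eq_zero.1 hzero.symm).symm,
        hone, Real.one_rpow, one_mul]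
      exact ⟨div_lt_self hpos hD, lt_mul_of_one_lt_left hpos hD⟩
  refine ⟨m, hm, fun ϱ hϱ hone hlt ε δ => ?_⟩
  rcases eq_or_ne ε δ with rfl | hne
  · simp [cubeDist_self, hϱ.self_eq_zero]
  have hnear := (not_imp_comm.1 fun hfar => hmin ϱ ⟨⟨hϱ, hone⟩, hfar⟩) hlt.not_ge ε δ hne
  rw [one_mul, one_div_mul_eq_div]
  exact ⟨hnear.1.le, hnear.2.le⟩

theorem exists_pos_hammingApprox {D : ℝ} (hp : 1 < p) (hD : 1 < D) :
    ∃ m : ℝ, 0 < m ∧ ∀ ϱ : (ι → Bool) → (ι → Bool) → ℝ, IsPseudometric ϱ →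
      defect p ϱ < m * edgeCost p ϱ → HammingApprox D (edgeCost p ϱ ^ p⁻¹) ϱ := by
  obtain ⟨m, hm, hstable⟩ := exists_pos_hammingApprox_one (ι := ι) hp hD
  refine ⟨m, hm, fun ϱ hϱ hlt => ?_⟩
  have hU : 0 < edgeCost p ϱ :=
    pos_of_mul_pos_right ((defect_nonneg hp.le hϱ).trans_lt hlt) hm.le
  set a := edgeCost p ϱ ^ p⁻¹ with ha
  have ha₀ : 0 < a := by positivity
  have hap : a⁻¹ ^ p = (edgeCost p ϱ)⁻¹ := by
    rw [Real.inv_rpow ha₀.le, ha, Real.rpow_inv_rpow hU.le (by linarith)]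
  have hone : edgeCost p (fun ε δ => a⁻¹ * ϱ ε δ) = 1 := by
    rw [edgeCost_const_mul (by positivity) hϱ, hap, inv_mul_cancel₀ hU.ne']
  have happrox := hstable _ (hϱ.const_mul (inv_nonneg.2 ha₀.le)) hone (by
    rwa [defect, diagCost, edgeCost_const_mul (by positivity) hϱ,
      flipCost_const_mul (by positivity) hϱ, hap, ← mul_sub, inv_mul_lt_iff₀' hU])
  intro ε δ
  obtain ⟨hlower, hupper⟩ := happrox ε δ
  rw [le_inv_mul_iff₀ ha₀] at hlower
  rw [inv_mul_le_iff₀ ha₀] at hupper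
  exact ⟨by linear_combination hlower, by linear_combination hupper⟩

end Flips

/-! ### Subcubes -/

section Subcubes

variable {α κ : Type*} [DecidableEq α]

/-- The copy of `2^κ` inside `2^α` through the base point `ε` in which the coordinates `x ∈ S` are
flipped according to the sign with index `π x`. -/
def subcube (S : Finset α) (π : α → κ) (ε : α → Bool) (δ : κ → Bool) : α → Bool :=
  flipOn {x ∈ S | δ (π x)} ε

lemma subcube_flipOn [DecidableEq κ] (S : Finset α) (π : α → κ) (A : Finset κ) (ε : α → Bool)
    (δ : κ → Bool) : subcube S π ε (flipOn A δ) = flipOn {x ∈ S | π x ∈ A} (subcube S π ε δ) := by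
  funext x
  by_cases hS : x ∈ S <;> by_cases hA : π x ∈ A <;> simp [subcube, flipOn, hS, hA]

variable [Fintype α] [Fintype κ] [DecidableEq κ]

/-- The average edge cost of the cubes obtained from `2^α` by merging the coordinates in each fibre
of `π`. -/
def groupCost (p : ℝ) (ϱ : (α → Bool) → (α → Bool) → ℝ) (π : α → κ) : ℝ :=
  (Fintype.card κ : ℝ) ^ (p - 1) * ∑ j, flipCost p ϱ {x | π x = j}

variable {p : ℝ} (ϱ : (α → Bool) → (α → Bool) → ℝ) (S : Finset α) (π : α → κ)

lemma expect_flipCost_subcube (A : Finset κ) :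
    𝔼 ε, flipCost p (ϱ on subcube S π ε) A = flipCost p ϱ {x ∈ S | π x ∈ A} := by
  calc 𝔼 ε, flipCost p (ϱ on subcube S π ε) A
      = 𝔼 δ, 𝔼 ε, ϱ (subcube S π ε δ) (flipOn {x ∈ S | π x ∈ A} (subcube S π ε δ)) ^ p := by
        simp only [flipCost, Function.onFun, subcube_flipOn]
        exact expect_comm _ _ _
    _ = 𝔼 _δ : κ → Bool, flipCost p ϱ {x ∈ S | π x ∈ A} :=
        expect_congr rfl fun δ _ => expect_comp_flipOn {x ∈ S | δ (π x)} fun ε =>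
          ϱ ε (flipOn {x ∈ S | π x ∈ A} ε) ^ p
    _ = flipCost p ϱ {x ∈ S | π x ∈ A} := Fintype.expect_const _

lemma expect_diagCost_subcube :
    𝔼 ε, diagCost p (ϱ on subcube S π ε) = flipCost p ϱ S := by
  simp [diagCost, expect_flipCost_subcube]

lemma expect_edgeCost_subcube :
    𝔼 ε, edgeCost p (ϱ on subcube S π ε) =
      (Fintype.card κ : ℝ) ^ (p - 1) * ∑ j, flipCost p ϱ {x ∈ S | π x = j} := by
  simp only [edgeCost, ← mul_expect, expect_sum_comm, expect_flipCost_subcube, mem_singleton]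

lemma edgeCost_eq_sum_expect_fiber (ϱ : (α × κ → Bool) → (α × κ → Bool) → ℝ) :
    edgeCost p ϱ = (Fintype.card α : ℝ) ^ (p - 1) *
      ∑ j, 𝔼 ε, edgeCost p (ϱ on subcube {x | x.1 = j} Prod.snd ε) := by
  have hfiber (j : α) (b : κ) :
      ({x ∈ {x : α × κ | x.1 = j} | x.2 = b} : Finset (α × κ)) = {(j, b)} := by
    ext x
    simp [Prod.ext_iff]
  simp only [expect_edgeCost_subcube, hfiber, ← mul_sum]
  rw [edgeCost, Fintype.sum_prod_type, Fintype.card_prod, Nat.cast_mul,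
    Real.mul_rpow (by positivity) (by positivity), mul_assoc]

lemma groupCost_fst_eq_sum_expect_fiber (ϱ : (α × κ → Bool) → (α × κ → Bool) → ℝ) :
    groupCost p ϱ Prod.fst = (Fintype.card α : ℝ) ^ (p - 1) *
      ∑ j, 𝔼 ε, diagCost p (ϱ on subcube {x | x.1 = j} Prod.snd ε) := by
  simp only [expect_diagCost_subcube, groupCost]

variable {ϱ}

lemma diagCost_le_groupCost (hp : 1 ≤ p) (h : IsPseudometric ϱ) :
    diagCost p ϱ ≤ groupCost p ϱ π := by
  have := expect_le_expect (s := univ) fun ε _ =>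
    diagCost_le_edgeCost hp (h.onFun (subcube univ π ε))
  rwa [expect_diagCost_subcube, expect_edgeCost_subcube] at this

lemma groupCost_fst_le_edgeCost {ϱ : (α × κ → Bool) → (α × κ → Bool) → ℝ} (hp : 1 ≤ p)
    (h : IsPseudometric ϱ) : groupCost p ϱ Prod.fst ≤ edgeCost p ϱ := by
  rw [edgeCost_eq_sum_expect_fiber, groupCost_fst_eq_sum_expect_fiber]
  gcongr
  exact diagCost_le_edgeCost hp (h.onFun _)

lemma groupCost_le_rpow_mul_sum {π : α → κ} {m : ℕ} (hp : 1 ≤ p) (h : IsPseudometric ϱ)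
    (hm : ∀ j, #{x | π x = j} ≤ m) :
    groupCost p ϱ π ≤ (Fintype.card κ * m : ℝ) ^ (p - 1) * ∑ i, flipCost p ϱ {i} := by
  rw [Real.mul_rpow (by positivity) (by positivity), mul_assoc,
    ← sum_fiberwise (s := univ) (g := π), mul_sum]
  unfold groupCost
  gcongr with j _
  refine (flipCost_le_rpow_mul_sum hp h _).trans ?_
  gcongr
  · exact sum_nonneg fun _ _ => flipCost_nonneg h _
  · exact hm j

end Subcubes

/-! ### Self-improvement of defect bounds -/

section SelfImprovement

variable {𝓕 : Set MetricMap} {p τ k l θ lam : ℝ}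
  {ι κ : Type*} [Fintype ι] [DecidableEq ι] [Fintype κ] [DecidableEq κ]

/-- The inequality `𝔼 ϱ_Y(ε, -ε)^p ≤ θ n^{p-1} ∑ᵢ 𝔼 ϱ_X(ε, dᵢε)^p` for all maps of the cube `2^ι`
into the domain of a member of `𝓕`; `b_{p,n}` is the infimum of the `b > 0` for which it holds with
`θ = b^p`. -/
def TypeInequality (𝓕 : Set MetricMap) (p θ : ℝ) (ι : Type*) [Fintype ι] [DecidableEq ι] : Prop :=
  ∀ G ∈ 𝓕, ∀ f : (ι → Bool) → G.X, diagCost p (dist on G.F ∘ f) ≤ θ * edgeCost p (dist on f)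

/-- A quantitative obstruction to near-extremality: the total defect of every map of `2^ι` is at
least `k` times the excess of `𝔼 ϱ_Y(ε, -ε)^p` over `τ` times the edge cost of `ϱ_X`. -/
def DefectBound (𝓕 : Set MetricMap) (p τ k : ℝ) (ι : Type*) [Fintype ι] [DecidableEq ι] : Prop :=
  ∀ G ∈ 𝓕, ∀ f : (ι → Bool) → G.X,
    k * (diagCost p (dist on G.F ∘ f) - τ * edgeCost p (dist on f)) ≤
      defect p (dist on f) + defect p (dist on G.F ∘ f)

lemma defectBound_zero (hp : 1 ≤ p) : DefectBound 𝓕 p τ 0 ι := fun G _ f => by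
  rw [zero_mul]
  exact add_nonneg (defect_nonneg hp (isPseudometric_dist.onFun f))
    (defect_nonneg hp (isPseudometric_dist.onFun (G.F ∘ f)))

lemma edgeCost_comp_le (hp : 0 ≤ p) (hlam : 0 ≤ lam) {G : MetricMap}
    (hG : ∀ x y : G.X, dist (G.F x) (G.F y) ≤ lam * dist x y) (f : (ι → Bool) → G.X) :
    edgeCost p (dist on G.F ∘ f) ≤ lam ^ p * edgeCost p (dist on f) :=
  edgeCost_le_rpow_mul hp hlam (isPseudometric_dist.onFun _) (isPseudometric_dist.onFun _)
    fun _ _ => hG _ _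

lemma DefectBound.onFun (h : DefectBound 𝓕 p τ k κ) {α : Type*} {G : MetricMap} (hG : G ∈ 𝓕)
    (f : α → G.X) (T : (κ → Bool) → α) :
    k * (diagCost p ((dist on G.F ∘ f) on T) - τ * edgeCost p ((dist on f) on T)) ≤
      defect p ((dist on f) on T) + defect p ((dist on G.F ∘ f) on T) :=
  h G hG (f ∘ T)

lemma DefectBound.group (h : DefectBound 𝓕 p τ k κ) {G : MetricMap} (hG : G ∈ 𝓕)
    (f : (ι → Bool) → G.X) (π : ι → κ) :
    k * (diagCost p (dist on G.F ∘ f) - τ * groupCost p (dist on f) π) ≤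
      (groupCost p (dist on f) π - diagCost p (dist on f)) +
        (groupCost p (dist on G.F ∘ f) π - diagCost p (dist on G.F ∘ f)) := by
  have haverage := expect_le_expect (s := univ) fun ε _ => h.onFun hG f (subcube univ π ε)
  simp only [defect, expect_add_distrib, expect_sub_distrib, ← mul_expect, expect_diagCost_subcube,
    expect_edgeCost_subcube] at haverage
  exact haverage

lemma DefectBound.fiber (h : DefectBound 𝓕 p τ l κ) {G : MetricMap} (hG : G ∈ 𝓕)
    (f : (ι × κ → Bool) → G.X) :
    l * (groupCost p (dist on G.F ∘ f) Prod.fst - τ * edgeCost p (dist on f)) ≤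
      (edgeCost p (dist on f) - groupCost p (dist on f) Prod.fst) +
        (edgeCost p (dist on G.F ∘ f) - groupCost p (dist on G.F ∘ f) Prod.fst) := by
  have haverage : (Fintype.card ι : ℝ) ^ (p - 1) * ∑ j, _ ≤ _ * ∑ j : ι, _ :=
    mul_le_mul_of_nonneg_left (sum_le_sum fun j _ => expect_le_expect (s := univ) fun ε _ =>
      h.onFun hG f (subcube {x | x.1 = j} Prod.snd ε)) (by positivity)
  simp only [defect, expect_add_distrib, expect_sub_distrib, sum_add_distrib, sum_sub_distrib,
    ← mul_expect, ← mul_sum] at haverage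
  simp only [edgeCost_eq_sum_expect_fiber, groupCost_fst_eq_sum_expect_fiber]
  linear_combination haverage

lemma DefectBound.prod (hp : 1 ≤ p) (hτ : 0 ≤ τ) (hk : 0 ≤ k) (hl : 0 ≤ l)
    (hι : DefectBound 𝓕 p τ k ι) (hκ : DefectBound 𝓕 p τ l κ) :
    DefectBound 𝓕 p τ (k + l) (ι × κ) := fun G hG f => by
  have hX : groupCost p (dist on f) Prod.fst ≤ edgeCost p (dist on f) :=
    groupCost_fst_le_edgeCost hp (isPseudometric_dist.onFun f)
  have hY : diagCost p (dist on G.F ∘ f) ≤ groupCost p (dist on G.F ∘ f) Prod.fst :=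
    diagCost_le_groupCost Prod.fst hp (isPseudometric_dist.onFun (G.F ∘ f))
  have hcoarse := hι.group hG f Prod.fst
  have hfine := hκ.fiber hG f
  have hkX := mul_le_mul_of_nonneg_left hX (mul_nonneg hk hτ)
  have hlY := mul_le_mul_of_nonneg_left hY hl
  unfold defect
  linarith

lemma DefectBound.exists_nat_mul {κ : Type} [Fintype κ] [DecidableEq κ] [Nonempty κ] (hp : 1 ≤ p)
    (hτ : 0 ≤ τ) (hk : 0 ≤ k) (h : DefectBound 𝓕 p τ k κ) (j : ℕ) :
    ∃ (ι : Type) (_ : Fintype ι) (_ : DecidableEq ι), Nonempty ι ∧ DefectBound 𝓕 p τ (j * k) ι := by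
  induction j with
  | zero =>
    exact ⟨Unit, inferInstance, inferInstance, inferInstance, by
      simpa using defectBound_zero hp⟩
  | succ j ih =>
    obtain ⟨ι, _, _, _, hι⟩ := ih
    refine ⟨ι × κ, inferInstance, inferInstance, inferInstance, ?_⟩
    rw [Nat.cast_succ, add_one_mul]
    exact hι.prod hp hτ (by positivity) hk h

lemma DefectBound.typeInequality (hp : 1 ≤ p) (hlam : 0 ≤ lam)
    (hLip : ∀ G ∈ 𝓕, ∀ x y : G.X, dist (G.F x) (G.F y) ≤ lam * dist x y) (hk : 0 < k)
    (h : DefectBound 𝓕 p τ k ι) : TypeInequality 𝓕 p (τ + (1 + lam ^ p) / k) ι := fun G hG f => by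
  have hUY := edgeCost_comp_le (zero_le_one.trans hp) hlam (hLip G hG) f
  have hVX : 0 ≤ diagCost p (dist on f) := flipCost_nonneg (isPseudometric_dist.onFun f) univ
  have hVY : 0 ≤ diagCost p (dist on G.F ∘ f) :=
    flipCost_nonneg (isPseudometric_dist.onFun (G.F ∘ f)) univ
  have hbound : k * (diagCost p (dist on G.F ∘ f) - τ * edgeCost p (dist on f)) ≤
      (1 + lam ^ p) * edgeCost p (dist on f) := by
    refine (h G hG f).trans ?_
    unfold defect
    linarith
  rw [← le_div_iff₀' hk] at hbound
  linear_combination hbound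

lemma TypeInequality.mono (h : TypeInequality 𝓕 p τ ι) (hle : τ ≤ θ) : TypeInequality 𝓕 p θ ι :=
  fun G hG f => (h G hG f).trans
    (mul_le_mul_of_nonneg_right hle (edgeCost_nonneg (isPseudometric_dist.onFun f)))

theorem DefectBound.exists_typeInequality {κ : Type} [Fintype κ] [DecidableEq κ] [Nonempty κ]
    (hp : 1 ≤ p) (hlam : 0 ≤ lam)
    (hLip : ∀ G ∈ 𝓕, ∀ x y : G.X, dist (G.F x) (G.F y) ≤ lam * dist x y) (hτ : 0 ≤ τ) (hτθ : τ < θ)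
    (hk : 0 < k) (h : DefectBound 𝓕 p τ k κ) :
    ∃ (ι : Type) (_ : Fintype ι) (_ : DecidableEq ι), Nonempty ι ∧ TypeInequality 𝓕 p θ ι := by
  obtain ⟨j, hj⟩ := exists_nat_gt ((1 + lam ^ p) / (θ - τ) / k)
  have hj₀ : (0 : ℝ) < j := lt_of_le_of_lt (by have := sub_pos.2 hτθ; positivity) hj
  obtain ⟨ι, _, _, hne, hι⟩ := h.exists_nat_mul hp hτ hk.le j
  refine ⟨ι, _, _, hne, (hι.typeInequality hp hlam hLip (mul_pos hj₀ hk)).mono ?_⟩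
  rw [div_lt_iff₀ hk, div_lt_comm₀ (sub_pos.2 hτθ) (mul_pos hj₀ hk)] at hj
  linarith

lemma lt_of_mul_lt_defect_add_defect {ϱ σ : (ι → Bool) → (ι → Bool) → ℝ} {m : ℝ} (hp : 1 ≤ p)
    (hlam : 0 ≤ lam) (hϱ : IsPseudometric ϱ) (hσ : IsPseudometric σ)
    (hle : edgeCost p σ ≤ lam ^ p * edgeCost p ϱ) (hτ : 0 ≤ τ) (hm : 0 < m)
    (hlt : defect p ϱ + defect p σ < m / (1 + lam ^ p) * (diagCost p σ - τ * edgeCost p ϱ)) :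
    defect p ϱ < m * edgeCost p ϱ ∧ defect p σ < m * edgeCost p σ ∧
      τ * edgeCost p ϱ < edgeCost p σ := by
  have hL : 1 ≤ 1 + lam ^ p := by simp [Real.rpow_nonneg hlam]
  have hϱ₀ := defect_nonneg hp hϱ
  have hσ₀ := defect_nonneg hp hσ
  have hdiag := diagCost_le_edgeCost hp hσ
  have hτϱ : 0 ≤ τ * edgeCost p ϱ := mul_nonneg hτ (edgeCost_nonneg hϱ)
  have hexcess : 0 < diagCost p σ - τ * edgeCost p ϱ :=
    pos_of_mul_pos_right ((add_nonneg hϱ₀ hσ₀).trans_lt hlt) (by positivity)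
  have hratio : (diagCost p σ - τ * edgeCost p ϱ) / (1 + lam ^ p) ≤ edgeCost p ϱ := by
    rw [div_le_iff₀ (by positivity)]
    linarith [edgeCost_nonneg (p := p) hϱ]
  have hratio' : (diagCost p σ - τ * edgeCost p ϱ) / (1 + lam ^ p) ≤ edgeCost p σ :=
    (div_le_self hexcess.le hL).trans (by linarith)
  rw [div_mul_eq_mul_div, mul_div_assoc] at hlt
  refine ⟨?_, ?_, by linarith⟩
  · linarith [mul_le_mul_of_nonneg_left hratio hm.le]
  · linarith [mul_le_mul_of_nonneg_left hratio' hm.le]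

theorem exists_hammingApprox {κ : Type} [Fintype κ] [Nonempty κ] {D : ℝ}
    (hp : 1 < p) (hlam : 0 ≤ lam)
    (hLip : ∀ G ∈ 𝓕, ∀ x y : G.X, dist (G.F x) (G.F y) ≤ lam * dist x y) (hτ : 0 ≤ τ) (hτθ : τ < θ)
    (hfail : ∀ (ι : Type) [Fintype ι] [DecidableEq ι] [Nonempty ι], ¬ TypeInequality 𝓕 p θ ι)
    (hD : 1 < D) :
    ∃ G ∈ 𝓕, ∃ f : (κ → Bool) → G.X, ∃ a b : ℝ, 0 < a ∧ 0 < b ∧ a * τ ^ p⁻¹ ≤ b ∧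
      HammingApprox D a (dist on f) ∧ HammingApprox D b (dist on G.F ∘ f) := by
  classical
  obtain ⟨m, hm, hstable⟩ := exists_pos_hammingApprox (ι := κ) hp hD
  have hno : ¬ DefectBound 𝓕 p τ (m / (1 + lam ^ p)) κ := fun h => by
    obtain ⟨ι, _, _, _, hι⟩ := h.exists_typeInequality hp.le hlam hLip hτ hτθ (by positivity)
    exact hfail ι hι
  unfold DefectBound at hno
  push Not at hno
  obtain ⟨G, hG, f, hlt⟩ := hno
  have hX : IsPseudometric (dist on f) := isPseudometric_dist.onFun f
  have hY : IsPseudometric (dist on G.F ∘ f) := isPseudometric_dist.onFun (G.F ∘ f)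
  obtain ⟨hdX, hdY, hτXY⟩ := lt_of_mul_lt_defect_add_defect hp.le hlam hX hY
    (edgeCost_comp_le (zero_le_one.trans hp.le) hlam (hLip G hG) f) hτ hm hlt
  have hX₀ := pos_of_mul_pos_right ((defect_nonneg hp.le hX).trans_lt hdX) hm.le
  have hY₀ := pos_of_mul_pos_right ((defect_nonneg hp.le hY).trans_lt hdY) hm.le
  refine ⟨G, hG, f, edgeCost p (dist on f) ^ p⁻¹, edgeCost p (dist on G.F ∘ f) ^ p⁻¹,
    by positivity, by positivity, ?_, hstable _ hX hdX, hstable _ hY hdY⟩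
  rw [mul_comm, ← Real.mul_rpow hτ hX₀.le]
  gcongr

end SelfImprovement

/-! ### Spreading to every dimension -/

section Spreading

variable {𝓕 : Set MetricMap} {p θ : ℝ}

lemma exists_map_card_fiber_le (n : ℕ) (κ : Type*) [Fintype κ] [DecidableEq κ] [Nonempty κ] :
    ∃ π : Fin n → κ, ∀ j, #{x | π x = j} ≤ n / Fintype.card κ + 1 := by
  let e := Fintype.equivFin κ
  refine ⟨fun x => e.symm ⟨x % Fintype.card κ, Nat.mod_lt _ Fintype.card_pos⟩, fun j => ?_⟩
  rw [← card_range (n / Fintype.card κ + 1)]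
  refine card_le_card_of_injOn (fun x => x / Fintype.card κ) (fun x _ => ?_)
    fun x hx y hy hdiv => ?_
  · simpa [Nat.lt_succ_iff] using Nat.div_le_div_right (c := Fintype.card κ) x.2.le
  · have hfiber := e.symm.injective ((mem_filter.1 hx).2.trans (mem_filter.1 hy).2.symm)
    have hmod : (x : ℕ) % Fintype.card κ = y % Fintype.card κ := congrArg Fin.val hfiber
    exact Fin.ext (by
      rw [← Nat.div_add_mod x (Fintype.card κ), ← Nat.div_add_mod y (Fintype.card κ), hmod]
      exact congrArg (Fintype.card κ * · + _) hdiv)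

lemma TypeInequality.of_card_fiber_le {α κ : Type*} [Fintype α] [DecidableEq α] [Fintype κ]
    [DecidableEq κ] {π : α → κ} {m : ℕ} (hp : 1 ≤ p) (hθ : 0 ≤ θ)
    (hm : ∀ j, #{x | π x = j} ≤ m) (hcard : Fintype.card κ * m ≤ 2 * Fintype.card α)
    (h : TypeInequality 𝓕 p θ κ) : TypeInequality 𝓕 p (2 ^ (p - 1) * θ) α := fun G hG f => by
  have haverage : 𝔼 ε, diagCost p ((dist on G.F ∘ f) on subcube univ π ε) ≤
      𝔼 ε, θ * edgeCost p ((dist on f) on subcube univ π ε) :=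
    expect_le_expect fun ε _ => h G hG (f ∘ subcube univ π ε)
  rw [expect_diagCost_subcube, ← mul_expect, expect_edgeCost_subcube] at haverage
  have hX : IsPseudometric (dist on f) := isPseudometric_dist.onFun f
  have hsum : 0 ≤ ∑ i, flipCost p (dist on f) {i} := sum_nonneg fun _ _ => flipCost_nonneg hX _
  have hgroup : groupCost p (dist on f) π ≤ 2 ^ (p - 1) * edgeCost p (dist on f) := by
    refine (groupCost_le_rpow_mul_sum hp hX hm).trans ?_
    rw [edgeCost, ← mul_assoc, ← Real.mul_rpow zero_le_two (by positivity)]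
    gcongr ?_ ^ (p - 1) * _
    exact_mod_cast hcard
  calc diagCost p (dist on G.F ∘ f) ≤ θ * groupCost p (dist on f) π := haverage
    _ ≤ θ * (2 ^ (p - 1) * edgeCost p (dist on f)) := by gcongr
    _ = 2 ^ (p - 1) * θ * edgeCost p (dist on f) := by ring

lemma TypeInequality.fin_of_card_le {κ : Type*} [Fintype κ] [DecidableEq κ] [Nonempty κ] {n : ℕ}
    (hp : 1 ≤ p) (hθ : 0 ≤ θ) (hn : Fintype.card κ ≤ n) (h : TypeInequality 𝓕 p θ κ) :
    TypeInequality 𝓕 p (2 ^ (p - 1) * θ) (Fin n) := by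
  obtain ⟨π, hπ⟩ := exists_map_card_fiber_le n κ
  refine h.of_card_fiber_le hp hθ hπ ?_
  rw [Fintype.card_fin, mul_add_one, two_mul]
  exact add_le_add (Nat.mul_div_le n _) hn

end Spreading

/-! ### Comparison of the constants -/

section Constants

variable {n : ℕ} {𝓕 : Set MetricMap} {p b lam : ℝ}

lemma cubeE_eq_expect (Φ : (Fin n → Bool) → ℝ) : cubeE n Φ = 𝔼 ε, Φ ε := by
  simp [cubeE, Fintype.expect_eq_sum_div_card]

lemma negCube_eq_flipOn : (negCube : (Fin n → Bool) → Fin n → Bool) = flipOn univ := by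
  funext ε i
  simp [negCube, flipOn]

lemma flipCoord_eq_flipOn (i : Fin n) : flipCoord i = flipOn {i} := by
  funext ε j
  by_cases hj : j = i <;> simp [flipCoord, flipOn, hj]

lemma hdist_eq_cubeDist : hdist n = cubeDist := by
  funext ε δ
  simp [hdist, cubeDist, hammingDist]

lemma hdist_negCube (hn : 0 < n) (ε : Fin n → Bool) : hdist n ε (negCube ε) = 1 := by
  simp [hdist, negCube, hn.ne']

lemma hdist_flipCoord (i : Fin n) (ε : Fin n → Bool) : hdist n ε (flipCoord i ε) = 1 / n := by
  have : ({j | ε j ≠ flipCoord i ε j} : Finset (Fin n)) = {i} := by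
    ext j
    rw [mem_filter_univ]
    by_cases hj : j = i <;> simp [flipCoord, hj]
  rw [hdist, this, card_singleton, Nat.cast_one]

lemma cubeE_dist_negCube_rpow (G : MetricMap) (f : (Fin n → Bool) → G.X) :
    cubeE n (fun ε => dist (G.F (f ε)) (G.F (f (negCube ε))) ^ p) =
      diagCost p (dist on G.F ∘ f) := by
  rw [cubeE_eq_expect, negCube_eq_flipOn]
  rfl

lemma rpow_mul_sum_cubeE_dist_flipCoord_rpow {X : Type} [MetricSpace X] (f : (Fin n → Bool) → X) :
    (n : ℝ) ^ (p - 1) * ∑ i : Fin n, cubeE n (fun ε => dist (f ε) (f (flipCoord i ε)) ^ p) =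
      edgeCost p (dist on f) := by
  simp only [cubeE_eq_expect, flipCoord_eq_flipOn, edgeCost, Fintype.card_fin]
  rfl

/-- The condition defining the constants `a` admissible for `a_n(𝓕)`. -/
def AAdmissible (𝓕 : Set MetricMap) (n : ℕ) (a : ℝ) : Prop :=
  0 < a ∧ ∀ G ∈ 𝓕, ∀ f : (Fin n → Bool) → G.X,
    cubeE n (fun ε => dist (G.F (f ε)) (G.F (f (negCube ε)))) ≤ a * cubeLip f

/-- The condition defining the constants `b` admissible for `b_{p,n}(𝓕)`. -/
def BAdmissible (𝓕 : Set MetricMap) (p : ℝ) (n : ℕ) (b : ℝ) : Prop :=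
  0 < b ∧ TypeInequality 𝓕 p (b ^ p) (Fin n)

lemma bConst_eq_sInf : bConst 𝓕 p n = sInf {b | BAdmissible 𝓕 p n b} := by
  simp only [bConst, BAdmissible, TypeInequality, mul_assoc, cubeE_dist_negCube_rpow,
    rpow_mul_sum_cubeE_dist_flipCoord_rpow]

lemma aConst_nonneg : 0 ≤ aConst 𝓕 n := Real.sInf_nonneg fun _ ha => ha.1.le

lemma bConst_nonneg : 0 ≤ bConst 𝓕 p n := Real.sInf_nonneg fun _ hb => hb.1.le

lemma aConst_le {a : ℝ} (ha : AAdmissible 𝓕 n a) : aConst 𝓕 n ≤ a :=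
  csInf_le ⟨0, fun _ h => h.1.le⟩ ha

lemma bConst_le (hb : BAdmissible 𝓕 p n b) : bConst 𝓕 p n ≤ b := by
  rw [bConst_eq_sInf]
  exact csInf_le ⟨0, fun _ h => h.1.le⟩ hb

section CubeLip

variable {X : Type} [MetricSpace X] (f : (Fin n → Bool) → X)

lemma cubeLip_nonneg : 0 ≤ cubeLip f := by
  refine Real.sSup_nonneg ?_
  rintro _ ⟨ε, δ, rfl⟩
  unfold hdist
  positivity

lemma dist_le_cubeLip_mul {ε δ : Fin n → Bool} (hne : ε ≠ δ) :
    dist (f ε) (f δ) ≤ cubeLip f * hdist n ε δ := by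
  have hfinite : {r : ℝ | ∃ ε δ, r = dist (f ε) (f δ) / hdist n ε δ}.Finite := by
    refine (Set.finite_range fun x : (Fin n → Bool) × (Fin n → Bool) =>
      dist (f x.1) (f x.2) / hdist n x.1 x.2).subset ?_
    rintro _ ⟨ε, δ, rfl⟩
    exact ⟨(ε, δ), rfl⟩
  rw [← div_le_iff₀ (hdist_eq_cubeDist ▸ cubeDist_pos hne)]
  exact le_csSup hfinite.bddAbove ⟨ε, δ, rfl⟩

variable {f} in
lemma cubeLip_le {L : ℝ} (hL : 0 ≤ L) (h : ∀ ε δ, dist (f ε) (f δ) ≤ L * hdist n ε δ) :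
    cubeLip f ≤ L := by
  refine Real.sSup_le ?_ hL
  rintro _ ⟨ε, δ, rfl⟩
  exact div_le_of_le_mul₀ (by unfold hdist; positivity) hL (h ε δ)

lemma edgeCost_le_cubeLip_rpow (hp : 0 < p) : edgeCost p (dist on f) ≤ cubeLip f ^ p := by
  have hL := cubeLip_nonneg f
  rcases n.eq_zero_or_pos with rfl | hn
  · simpa [edgeCost] using Real.rpow_nonneg hL p
  have hedge (i : Fin n) : flipCost p (dist on f) {i} ≤ (cubeLip f * (1 / n)) ^ p := by
    refine expect_le univ_nonempty fun ε _ => ?_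
    rw [← flipCoord_eq_flipOn, ← hdist_flipCoord i ε]
    gcongr
    exact dist_le_cubeLip_mul f fun h => by simpa [flipCoord] using congrFun h i
  have hn₀ : (0 : ℝ) < n := by exact_mod_cast hn
  calc edgeCost p (dist on f) ≤ (n : ℝ) ^ (p - 1) * (n * (cubeLip f * (1 / n)) ^ p) := by
        rw [edgeCost, Fintype.card_fin]
        gcongr
        simpa using sum_le_card_nsmul univ _ _ fun i _ => hedge i
    _ = cubeLip f ^ p := by
        rw [← mul_assoc, ← Real.rpow_add_one hn₀.ne', sub_add_cancel,
          ← Real.mul_rpow hn₀.le (by positivity)]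
        congr 1
        field_simp

end CubeLip

lemma bAdmissible_of_lipschitz (hp : 1 ≤ p) (hlam : 0 < lam)
    (hLip : ∀ G ∈ 𝓕, ∀ x y : G.X, dist (G.F x) (G.F y) ≤ lam * dist x y) :
    BAdmissible 𝓕 p n lam :=
  ⟨hlam, fun G hG f => (diagCost_le_edgeCost hp (isPseudometric_dist.onFun _)).trans
    (edgeCost_comp_le (by linarith) hlam.le (hLip G hG) f)⟩

lemma BAdmissible.aAdmissible (hp : 1 ≤ p) (hb : BAdmissible 𝓕 p n b) : AAdmissible 𝓕 n b := by
  obtain ⟨hb₀, hb⟩ := hb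
  refine ⟨hb₀, fun G hG f => ?_⟩
  have hp₀ : 0 < p := by linarith
  have hL := cubeLip_nonneg f
  rw [cubeE_eq_expect, ← Real.rpow_le_rpow_iff (expect_nonneg fun _ _ => dist_nonneg)
    (by positivity) hp₀]
  calc _ ≤ 𝔼 ε, dist (G.F (f ε)) (G.F (f (negCube ε))) ^ p :=
        expect_rpow_le hp fun _ _ => dist_nonneg
    _ = diagCost p (dist on G.F ∘ f) := by rw [← cubeE_eq_expect, cubeE_dist_negCube_rpow]
    _ ≤ b ^ p * cubeLip f ^ p := (hb G hG f).trans (by gcongr; exact edgeCost_le_cubeLip_rpow f hp₀)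
    _ = (b * cubeLip f) ^ p := (Real.mul_rpow hb₀.le hL).symm

lemma aConst_le_bConst (hp : 1 ≤ p) (hlam : 0 < lam)
    (hLip : ∀ G ∈ 𝓕, ∀ x y : G.X, dist (G.F x) (G.F y) ≤ lam * dist x y) :
    aConst 𝓕 n ≤ bConst 𝓕 p n := by
  rw [bConst_eq_sInf]
  exact le_csInf ⟨lam, bAdmissible_of_lipschitz hp hlam hLip⟩ fun _ hb =>
    aConst_le (hb.aAdmissible hp)

/-- `𝓕` factors the single cube `2^n`, with ratio `c` and distortion `D`. -/
def FactorsCube (𝓕 : Set MetricMap) (n : ℕ) (c D : ℝ) : Prop :=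
  ∃ G ∈ 𝓕, ∃ f : (Fin n → Bool) → G.X, ∃ a b : ℝ, 0 < a ∧ 0 < b ∧ a * c ≤ b ∧
    ∀ ε δ : Fin n → Bool,
      a / D * hdist n ε δ ≤ dist (f ε) (f δ) ∧
      dist (f ε) (f δ) ≤ a * D * hdist n ε δ ∧
      b / D * hdist n ε δ ≤ dist (G.F (f ε)) (G.F (f δ)) ∧
      dist (G.F (f ε)) (G.F (f δ)) ≤ b * D * hdist n ε δ

lemma FactorsCube.div_sq_le {a c D : ℝ} (hn : 0 < n) (hD : 0 < D) (h : FactorsCube 𝓕 n c D)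
    (ha : AAdmissible 𝓕 n a) : c / D ^ 2 ≤ a := by
  obtain ⟨G, hG, f, r, s, hr, _, hrs, hf⟩ := h
  have hdiag : s / D ≤ cubeE n (fun ε => dist (G.F (f ε)) (G.F (f (negCube ε)))) := by
    rw [cubeE_eq_expect]
    refine le_expect univ_nonempty fun ε _ => ?_
    simpa only [hdist_negCube hn, mul_one] using (hf ε (negCube ε)).2.2.1
  have hLip : cubeLip f ≤ r * D := cubeLip_le (by positivity) fun ε δ => (hf ε δ).2.1
  have hratio : r * c / D ≤ a * (r * D) :=
    calc r * c / D ≤ s / D := by gcongr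
      _ ≤ a * cubeLip f := hdiag.trans (ha.2 G hG f)
      _ ≤ a * (r * D) := mul_le_mul_of_nonneg_left hLip ha.1.le
  rw [div_le_iff₀ hD] at hratio
  rw [div_le_iff₀ (by positivity)]
  exact le_of_mul_le_mul_left (by linarith) hr

end Constants

/-! ### Upper limits -/

section Limsup

open Filter

variable {𝓕 : Set MetricMap} {p lam : ℝ}

lemma limsup_aConst_pos_of_crudelyFactorsHammingCubes (hlam : 0 < lam)
    (hLip : ∀ G ∈ 𝓕, ∀ x y : G.X, dist (G.F x) (G.F y) ≤ lam * dist x y)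
    (h : CrudelyFactorsHammingCubes 𝓕) : 0 < limsup (aConst 𝓕) atTop := by
  obtain ⟨c, D, hc, hD, h⟩ := h
  have hadm (n : ℕ) : AAdmissible 𝓕 n lam :=
    (bAdmissible_of_lipschitz one_le_two hlam hLip).aAdmissible one_le_two
  have hlower : ∃ᶠ n in atTop, c / D ^ 2 ≤ aConst 𝓕 n :=
    ((eventually_gt_atTop 0).mono fun n hn =>
      le_csInf ⟨lam, hadm n⟩ fun _ ha => FactorsCube.div_sq_le hn hD (h n hn) ha).frequently
  exact (by positivity : 0 < c / D ^ 2).trans_le (le_limsup_of_frequently_le hlower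
    (isBoundedUnder_of ⟨lam, fun n => aConst_le (hadm n)⟩))

lemma limsup_aConst_le_limsup_bConst (hp : 1 ≤ p) (hlam : 0 < lam)
    (hLip : ∀ G ∈ 𝓕, ∀ x y : G.X, dist (G.F x) (G.F y) ≤ lam * dist x y) :
    limsup (aConst 𝓕) atTop ≤ limsup (bConst 𝓕 p) atTop :=
  limsup_le_limsup (.of_forall fun _ => aConst_le_bConst hp hlam hLip)
    (isBoundedUnder_of ⟨0, fun _ => aConst_nonneg⟩).isCoboundedUnder_le
    (isBoundedUnder_of ⟨lam, fun _ => bConst_le (bAdmissible_of_lipschitz hp hlam hLip)⟩)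

lemma exists_forall_not_typeInequality (hp : 1 ≤ p) (h : 0 < limsup (bConst 𝓕 p) atTop) :
    ∃ θ : ℝ, 0 < θ ∧ ∀ (κ : Type) [Fintype κ] [DecidableEq κ] [Nonempty κ],
      ¬ TypeInequality 𝓕 p θ κ := by
  obtain ⟨t, ht₀, ht⟩ := exists_between h
  have hfreq : ∃ᶠ n in atTop, t < bConst 𝓕 p n := frequently_lt_of_lt_limsup
    (isBoundedUnder_of ⟨0, fun _ => bConst_nonneg⟩).isCoboundedUnder_le ht
  refine ⟨t ^ p / 2 ^ (p - 1), by positivity, fun κ _ _ _ hκ => ?_⟩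
  obtain ⟨n, hn, hnt⟩ := frequently_atTop.1 hfreq (Fintype.card κ)
  have hfin := hκ.fin_of_card_le hp (by positivity) hn
  rw [mul_div_cancel₀ _ (by positivity)] at hfin
  exact hnt.not_ge (bConst_le ⟨ht₀, hfin⟩)

theorem factorsHammingCubes_of_limsup_bConst_pos (hp : 1 < p) (hlam : 0 ≤ lam)
    (hLip : ∀ G ∈ 𝓕, ∀ x y : G.X, dist (G.F x) (G.F y) ≤ lam * dist x y)
    (h : 0 < limsup (bConst 𝓕 p) atTop) : FactorsHammingCubes 𝓕 := by
  obtain ⟨θ, hθ, hfail⟩ := exists_forall_not_typeInequality hp.le h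
  refine ⟨(θ / 2) ^ p⁻¹, by positivity, fun D hD n hn => ?_⟩
  have : Nonempty (Fin n) := ⟨⟨0, hn⟩⟩
  obtain ⟨G, hG, f, a, b, ha, hb, hab, hX, hY⟩ :=
    exists_hammingApprox (κ := Fin n) hp hlam hLip (half_pos hθ).le (half_lt_self hθ) hfail hD
  refine ⟨G, hG, f, a, b, ha, hb, hab, fun ε δ => ?_⟩
  rw [hdist_eq_cubeDist]
  exact ⟨(hX ε δ).1, (hX ε δ).2, (hY ε δ).1, (hY ε δ).2⟩

end Limsup

end HammingCube

/-- Main theorem: the five conditions are equivalent for a family `𝓕` of `λ`-Lipschitz maps. -/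
theorem main_theorem (lam : ℝ) (hlam : 0 < lam) (𝓕 : Set MetricMap)
    (hLip : ∀ G ∈ 𝓕, ∀ x y : G.X, dist (G.F x) (G.F y) ≤ lam * dist x y) :
    [FactorsHammingCubes 𝓕,
     CrudelyFactorsHammingCubes 𝓕,
     0 < Filter.limsup (fun n : ℕ => aConst 𝓕 n) Filter.atTop,
     ∀ p : ℝ, 1 < p → 0 < Filter.limsup (fun n : ℕ => bConst 𝓕 p n) Filter.atTop,
     ∃ p : ℝ, 1 < p ∧ 0 < Filter.limsup (fun n : ℕ => bConst 𝓕 p n) Filter.atTop].TFAE := by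
  tfae_have 1 → 2 := fun ⟨c, hc, h⟩ => ⟨c, 2, hc, two_pos, h 2 one_lt_two⟩
  tfae_have 2 → 3 := HammingCube.limsup_aConst_pos_of_crudelyFactorsHammingCubes hlam hLip
  tfae_have 3 → 4 := fun h p hp =>
    h.trans_le (HammingCube.limsup_aConst_le_limsup_bConst hp.le hlam hLip)
  tfae_have 4 → 5 := fun h => ⟨2, one_lt_two, h 2 one_lt_two⟩
  tfae_have 5 → 1 := fun ⟨_, hp, h⟩ =>
    HammingCube.factorsHammingCubes_of_limsup_bConst_pos hp hlam.le hLip h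
  tfae_finish
end
end

section
/- Let λ ∈ (0,∞), let 𝓕 be a family of λ-Lipschitz maps between metric spaces, and let 1 < p < ∞. Then limsup_n b_{p,n}(𝓕) ≥ c(𝓕) ≥ limsup_n b_{p,2^n}(𝓕) ≥ 2^{1/p−1}·limsup_n b_{p,n}(𝓕). -/
open Finset

noncomputable section

/-- `c(𝓕)`: the supremum of those `c > 0` witnessing the factorization of the Hamming cubes
(`sSup ∅ = 0` in `ℝ`, matching the convention `c(𝓕) = 0` if no such `c` exists). -/
def cConst (𝓕 : Set MetricMap) : ℝ :=
  sSup { c : ℝ | 0 < c ∧ ∀ D : ℝ, 1 < D → ∀ n : ℕ, 0 < n →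
    ∃ G ∈ 𝓕, ∃ f : (Fin n → Bool) → G.X, ∃ a b : ℝ, 0 < a ∧ 0 < b ∧ a * c ≤ b ∧
      ∀ ε δ : Fin n → Bool,
        a / D * hdist n ε δ ≤ dist (f ε) (f δ) ∧
        dist (f ε) (f δ) ≤ a * D * hdist n ε δ ∧
        b / D * hdist n ε δ ≤ dist (G.F (f ε)) (G.F (f δ)) ∧
        dist (G.F (f ε)) (G.F (f δ)) ≤ b * D * hdist n ε δ }

/-!
By convexity of `t ↦ t ^ p`, the antipodal energy of a pseudometric on a cube is at most its edge
energy. Equality forces a multiple of the Hamming metric, so by compactness a pseudometric of fixed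
dimension with almost equal energies is, up to distortion `D`, a multiple of the Hamming metric.

Grouping coordinates into blocks shows that every constant admissible for one cube bounds the limsup
`L` of `b_{p,n}` from above. For `c < L` pick `a < L < b` close to `L` and a box `κ × μ × τ` of
coordinates such that `b` is admissible for `κ` and for `τ`. As `a` is not admissible for the box,
some `F ∘ f` violates its inequality, while the passage from the box to the layers `μ × τ` and the
one from the blocks `τ` to single coordinates each cost a factor of at most `b ^ p`. Hence, on
average over the `μ`-dimensional subcubes that flip whole blocks, almost nothing is lost in between:
on some subcube both `f` and `F ∘ f` have almost equal energies, and their scales have ratio at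
least `c`. So `L ≤ c(𝓕)`. Conversely, almost isometric copies of the Hamming cube give
`c(𝓕) ≤ b_{p,n}` for every `n > 0`, so that `b_{p,n}` even converges to `c(𝓕)`.
-/

open Filter Topology
open scoped Function

/-! ### Flips and energies on the cube -/

section Pseudometric

variable {V W : Type*}

/-- `ρ` is a pseudometric. Unlike for Mathlib's bundled `PseudoMetric`, the distance is a bare
function, so that pseudometrics on a finite set are points of the topological vector space
`V → V → ℝ`. -/
structure IsPseudometric (ρ : V → V → ℝ) : Prop where
  self : ∀ x, ρ x x = 0
  symm : ∀ x y, ρ x y = ρ y x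
  triangle : ∀ x y z, ρ x z ≤ ρ x y + ρ y z

lemma isPseudometric_dist_on {X : Type*} [PseudoMetricSpace X] (f : V → X) :
    IsPseudometric (dist on f) :=
  ⟨fun _ => dist_self _, fun _ _ => dist_comm _ _, fun _ _ _ => dist_triangle _ _ _⟩

variable {ρ : V → V → ℝ}

lemma IsPseudometric.nonneg (hρ : IsPseudometric ρ) (x y : V) : 0 ≤ ρ x y := by
  have := hρ.triangle x y x
  rw [hρ.self, hρ.symm y x] at this
  linarith

lemma IsPseudometric.smul (hρ : IsPseudometric ρ) {r : ℝ} (hr : 0 ≤ r) :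
    IsPseudometric (r • ρ) where
  self x := by simp [hρ.self]
  symm x y := by simp [hρ.symm x y]
  triangle x y z := by
    simpa [mul_add] using mul_le_mul_of_nonneg_left (hρ.triangle x y z) hr

variable (V) in
lemma isClosed_setOf_isPseudometric : IsClosed {ρ : V → V → ℝ | IsPseudometric ρ} := by
  have : {ρ : V → V → ℝ | IsPseudometric ρ} =
      {ρ | (∀ x, ρ x x = 0) ∧ (∀ x y, ρ x y = ρ y x) ∧ ∀ x y z, ρ x z ≤ ρ x y + ρ y z} :=
    Set.ext fun ρ => ⟨fun h => ⟨h.1, h.2, h.3⟩, fun h => ⟨h.1, h.2.1, h.2.2⟩⟩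
  simp only [this, Set.ofPred_and, Set.ofPred_forall]
  refine .inter (isClosed_iInter fun x => ?_) (.inter
    (isClosed_iInter fun x => isClosed_iInter fun y => ?_)
    (isClosed_iInter fun x => isClosed_iInter fun y => isClosed_iInter fun z => ?_))
  · exact isClosed_eq (by fun_prop) (by fun_prop)
  · exact isClosed_eq (by fun_prop) (by fun_prop)
  · exact isClosed_le (by fun_prop) (by fun_prop)

lemma isOpen_setOf_forall_ne_mem_Ioo [Finite V] (l u : V → V → ℝ) :
    IsOpen {ρ : V → V → ℝ | ∀ x y, x ≠ y → ρ x y ∈ Set.Ioo (l x y) (u x y)} := by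
  simp only [Set.ofPred_forall]
  exact isOpen_iInter_of_finite fun x => isOpen_iInter_of_finite fun y =>
    isOpen_iInter_of_finite fun _ => isOpen_Ioo.preimage (continuous_apply_apply x y)

end Pseudometric

section Flip

variable {ι : Type*} [DecidableEq ι]

/-- The point obtained from `ε` by flipping the coordinates that belong to `S`. -/
def flipSet (S : Finset ι) (ε : ι → Bool) : ι → Bool := fun i => xor (ε i) (decide (i ∈ S))

@[simp]
lemma flipSet_empty (ε : ι → Bool) : flipSet ∅ ε = ε := by
  funext i
  simp [flipSet]

lemma flipSet_union {S T : Finset ι} (h : Disjoint S T) (ε : ι → Bool) :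
    flipSet (S ∪ T) ε = flipSet T (flipSet S ε) := by
  funext i
  have : i ∈ S → i ∉ T := fun hS => Finset.disjoint_left.1 h hS
  by_cases hS : i ∈ S <;> by_cases hT : i ∈ T <;> simp_all [flipSet]

lemma flipSet_involutive (S : Finset ι) : Function.Involutive (flipSet S) := fun ε => by
  funext i
  simp [flipSet]

variable [Fintype ι]

lemma flipSet_filter_ne (x y : ι → Bool) : flipSet {i | x i ≠ y i} x = y := by
  funext i
  cases hx : x i <;> cases hy : y i <;> simp [flipSet, hx, hy]

lemma hammingDist_flipSet (S : Finset ι) (ε : ι → Bool) : hammingDist ε (flipSet S ε) = #S := by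
  have : ({i | ε i ≠ flipSet S ε i} : Finset ι) = S := by
    ext i
    rw [mem_filter_univ]
    by_cases hi : i ∈ S <;> simp [flipSet, hi]
  rw [hammingDist, this]

lemma sum_comp_flipSet {M : Type*} [AddCommMonoid M] (S : Finset ι) (Φ : (ι → Bool) → M) :
    ∑ ε, Φ (flipSet S ε) = ∑ ε, Φ ε :=
  (flipSet_involutive S).bijective.sum_comp Φ

/-- The unnormalised `p`-energy `∑ ε, ρ(ε, flip_S ε) ^ p` of the flips of all coordinates in `S`:
singletons `S` give the edges in one direction, `S = univ` gives the antipodes. -/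
def flipEnergy (p : ℝ) (ρ : (ι → Bool) → (ι → Bool) → ℝ) (S : Finset ι) : ℝ :=
  ∑ ε, ρ ε (flipSet S ε) ^ p

/-- The antipodal side of the inequality that defines `b_{p,n}`, multiplied by `2 ^ n`. -/
def antipodalEnergy (p : ℝ) (ρ : (ι → Bool) → (ι → Bool) → ℝ) : ℝ := flipEnergy p ρ univ

/-- The edge side of the inequality that defines `b_{p,n}`, without the factor `b ^ p` and
multiplied by `2 ^ n`. Both sides agree if `ρ` is a multiple of the Hamming metric. -/
def edgeEnergy (p : ℝ) (ρ : (ι → Bool) → (ι → Bool) → ℝ) : ℝ :=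
  (Fintype.card ι : ℝ) ^ (p - 1) * ∑ i, flipEnergy p ρ {i}

variable {p : ℝ} {ρ : (ι → Bool) → (ι → Bool) → ℝ}

lemma flipEnergy_smul (hρ : IsPseudometric ρ) {r : ℝ} (hr : 0 ≤ r) (S : Finset ι) :
    flipEnergy p (r • ρ) S = r ^ p * flipEnergy p ρ S := by
  simp [flipEnergy, mul_sum, Real.mul_rpow hr (hρ.nonneg _ _)]

lemma antipodalEnergy_smul (hρ : IsPseudometric ρ) {r : ℝ} (hr : 0 ≤ r) :
    antipodalEnergy p (r • ρ) = r ^ p * antipodalEnergy p ρ :=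
  flipEnergy_smul hρ hr univ

lemma edgeEnergy_smul (hρ : IsPseudometric ρ) {r : ℝ} (hr : 0 ≤ r) :
    edgeEnergy p (r • ρ) = r ^ p * edgeEnergy p ρ := by
  simp only [edgeEnergy, flipEnergy_smul hρ hr, ← mul_sum]
  ring

lemma continuous_flipEnergy (hp : 0 ≤ p) (S : Finset ι) :
    Continuous fun ρ : (ι → Bool) → (ι → Bool) → ℝ => flipEnergy p ρ S :=
  continuous_finsetSum _ fun ε _ =>
    (continuous_apply_apply ε (flipSet S ε)).rpow_const fun _ => Or.inr hp

namespace IsPseudometric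

lemma flipEnergy_nonneg (hρ : IsPseudometric ρ) (S : Finset ι) : 0 ≤ flipEnergy p ρ S :=
  sum_nonneg fun _ _ => Real.rpow_nonneg (hρ.nonneg _ _) _

lemma edgeEnergy_nonneg (hρ : IsPseudometric ρ) : 0 ≤ edgeEnergy p ρ :=
  mul_nonneg (by positivity) (sum_nonneg fun _ _ => hρ.flipEnergy_nonneg _)

lemma flipEnergy_empty (hp : p ≠ 0) (hρ : IsPseudometric ρ) : flipEnergy p ρ ∅ = 0 := by
  simp [flipEnergy, hρ.self, Real.zero_rpow hp]

end IsPseudometric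

end Flip

/-! ### Convexity of the energies -/

section PowerMean

variable {p a b r u v : ℝ}

private lemma weighted_mean_div_rpow (ha : 0 < a) (hb : 0 < b) (hu : 0 ≤ u) (hv : 0 ≤ v) :
    a / (a + b) * (u / a) ^ p + b / (a + b) * (v / b) ^ p =
      (a + b) ^ (p - 1) * (u ^ p / a ^ (p - 1) + v ^ p / b ^ (p - 1)) / (a + b) ^ p := by
  have hab : 0 < a + b := by positivity
  simp only [Real.div_rpow hu ha.le, Real.div_rpow hv hb.le, Real.rpow_sub_one ha.ne',
    Real.rpow_sub_one hb.ne', Real.rpow_sub_one hab.ne']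
  field_simp

lemma add_rpow_le_weighted_div (hp : 1 ≤ p) (ha : 0 < a) (hb : 0 < b) (hu : 0 ≤ u) (hv : 0 ≤ v) :
    (u + v) ^ p ≤ (a + b) ^ (p - 1) * (u ^ p / a ^ (p - 1) + v ^ p / b ^ (p - 1)) := by
  have hmean : a / (a + b) * (u / a) + b / (a + b) * (v / b) = (u + v) / (a + b) := by field_simp
  have hconvex := (convexOn_rpow hp).2 (Set.mem_Ici.2 (div_nonneg hu ha.le))
    (Set.mem_Ici.2 (div_nonneg hv hb.le)) (by positivity : 0 ≤ a / (a + b))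
    (by positivity : 0 ≤ b / (a + b)) (by field_simp)
  simp only [smul_eq_mul] at hconvex
  rwa [hmean, weighted_mean_div_rpow ha hb hu hv, Real.div_rpow (by positivity) (by positivity),
    div_le_div_iff_of_pos_right (by positivity)] at hconvex

lemma add_rpow_lt_weighted_div (hp : 1 < p) (ha : 0 < a) (hb : 0 < b) (hu : 0 ≤ u) (hv : 0 ≤ v)
    (huv : u / a ≠ v / b) :
    (u + v) ^ p < (a + b) ^ (p - 1) * (u ^ p / a ^ (p - 1) + v ^ p / b ^ (p - 1)) := by
  have hmean : a / (a + b) * (u / a) + b / (a + b) * (v / b) = (u + v) / (a + b) := by field_simp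
  have hconvex := (strictConvexOn_rpow hp).2 (Set.mem_Ici.2 (div_nonneg hu ha.le))
    (Set.mem_Ici.2 (div_nonneg hv hb.le)) huv (by positivity : 0 < a / (a + b))
    (by positivity : 0 < b / (a + b)) (by field_simp)
  simp only [smul_eq_mul] at hconvex
  rwa [hmean, weighted_mean_div_rpow ha hb hu hv, Real.div_rpow (by positivity) (by positivity),
    div_lt_div_iff_of_pos_right (by positivity)] at hconvex

lemma eq_div_mul_of_weighted_div_le_rpow (hp : 1 < p) (ha : 0 < a) (hb : 0 < b) (hu : 0 ≤ u)
    (hv : 0 ≤ v) (hr : 0 ≤ r) (hruv : r ≤ u + v)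
    (h : (a + b) ^ (p - 1) * (u ^ p / a ^ (p - 1) + v ^ p / b ^ (p - 1)) ≤ r ^ p) :
    r = (a + b) / a * u := by
  have hp0 : 0 < p := by linarith
  have hle : u + v ≤ r := (Real.rpow_le_rpow_iff (add_nonneg hu hv) hr hp0).1
    ((add_rpow_le_weighted_div hp.le ha hb hu hv).trans h)
  have hratio : u / a = v / b := by
    by_contra hne
    exact ((add_rpow_lt_weighted_div hp ha hb hu hv hne).trans_le h).not_ge (by gcongr)
  rw [le_antisymm hruv hle]
  field_simp at hratio ⊢
  linarith

end PowerMean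

section Subadditivity

variable {ι κ : Type*} [DecidableEq ι] {p a b : ℝ} {ρ : (ι → Bool) → (ι → Bool) → ℝ}
  {S T : Finset ι}

namespace IsPseudometric

lemma flipSet_union_le (hρ : IsPseudometric ρ) (hST : Disjoint S T) (ε : ι → Bool) :
    ρ ε (flipSet (S ∪ T) ε) ≤
      ρ ε (flipSet S ε) + ρ (flipSet S ε) (flipSet T (flipSet S ε)) := by
  rw [flipSet_union hST]
  exact hρ.triangle _ _ _

lemma flipSet_union_rpow_le (hρ : IsPseudometric ρ) (hp : 1 ≤ p) (ha : 0 < a) (hb : 0 < b)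
    (hST : Disjoint S T) (ε : ι → Bool) :
    ρ ε (flipSet (S ∪ T) ε) ^ p ≤ (a + b) ^ (p - 1) * (ρ ε (flipSet S ε) ^ p / a ^ (p - 1) +
      ρ (flipSet S ε) (flipSet T (flipSet S ε)) ^ p / b ^ (p - 1)) :=
  (Real.rpow_le_rpow (hρ.nonneg _ _) (hρ.flipSet_union_le hST ε) (by linarith)).trans
    (add_rpow_le_weighted_div hp ha hb (hρ.nonneg _ _) (hρ.nonneg _ _))

lemma flipSet_le_card_mul {e : ℝ} (hρ : IsPseudometric ρ) (h : ∀ ε i, ρ ε (flipSet {i} ε) ≤ e)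
    (S : Finset ι) (ε : ι → Bool) : ρ ε (flipSet S ε) ≤ #S * e := by
  induction S using Finset.cons_induction generalizing ε with
  | empty => simp [hρ.self]
  | cons i S hi ih =>
    have hstep := hρ.flipSet_union_le (disjoint_singleton_left.2 hi) ε
    rw [cons_eq_insert, card_insert_of_notMem hi, insert_eq, Nat.cast_succ]
    linarith [h ε i, ih (flipSet {i} ε)]

end IsPseudometric

variable [Fintype ι]

lemma weighted_flipEnergy_eq_sum (p a b : ℝ) (ρ : (ι → Bool) → (ι → Bool) → ℝ) (S T : Finset ι) :
    (a + b) ^ (p - 1) * (flipEnergy p ρ S / a ^ (p - 1) + flipEnergy p ρ T / b ^ (p - 1)) =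
      ∑ ε, (a + b) ^ (p - 1) * (ρ ε (flipSet S ε) ^ p / a ^ (p - 1) +
        ρ (flipSet S ε) (flipSet T (flipSet S ε)) ^ p / b ^ (p - 1)) := by
  rw [← mul_sum, sum_add_distrib, ← sum_div, ← sum_div,
    sum_comp_flipSet S fun ε => ρ ε (flipSet T ε) ^ p, flipEnergy, flipEnergy]

namespace IsPseudometric

lemma flipEnergy_union_le (hρ : IsPseudometric ρ) (hp : 1 ≤ p) (ha : 0 < a) (hb : 0 < b)
    (hST : Disjoint S T) :
    flipEnergy p ρ (S ∪ T) ≤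
      (a + b) ^ (p - 1) * (flipEnergy p ρ S / a ^ (p - 1) + flipEnergy p ρ T / b ^ (p - 1)) := by
  rw [weighted_flipEnergy_eq_sum]
  exact sum_le_sum fun ε _ => hρ.flipSet_union_rpow_le hp ha hb hST ε

lemma flipSet_union_eq_of_le_flipEnergy (hρ : IsPseudometric ρ) (hp : 1 < p) (ha : 0 < a)
    (hb : 0 < b) (hST : Disjoint S T)
    (h : (a + b) ^ (p - 1) * (flipEnergy p ρ S / a ^ (p - 1) + flipEnergy p ρ T / b ^ (p - 1)) ≤
      flipEnergy p ρ (S ∪ T)) (ε : ι → Bool) :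
    ρ ε (flipSet (S ∪ T) ε) = (a + b) / a * ρ ε (flipSet S ε) := by
  have hpointwise := fun ε (_ : ε ∈ univ) => hρ.flipSet_union_rpow_le hp.le ha hb hST ε
  have hsum := (hρ.flipEnergy_union_le hp.le ha hb hST).antisymm h
  rw [weighted_flipEnergy_eq_sum] at hsum
  exact eq_div_mul_of_weighted_div_le_rpow hp ha hb (hρ.nonneg _ _) (hρ.nonneg _ _)
    (hρ.nonneg _ _) (hρ.flipSet_union_le hST ε)
    ((sum_eq_sum_iff_of_le hpointwise).1 hsum ε (mem_univ ε)).ge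

lemma flipEnergy_biUnion_le (hρ : IsPseudometric ρ) (hp : 1 ≤ p) {t : κ → Finset ι}
    (ht : Pairwise (Disjoint on t)) (s : Finset κ) :
    flipEnergy p ρ (s.biUnion t) ≤ (#s : ℝ) ^ (p - 1) * ∑ j ∈ s, flipEnergy p ρ (t j) := by
  classical
  induction s using Finset.induction_on with
  | empty => simp [hρ.flipEnergy_empty (by linarith : p ≠ 0)]
  | insert j s hj ih =>
    rcases s.eq_empty_or_nonempty with rfl | hs
    · simp
    have hdisj : Disjoint (t j) (s.biUnion t) :=
      (disjoint_biUnion_right _ _ _).2 fun l hl => ht (ne_of_mem_of_not_mem hl hj).symm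
    have hcard : (0 : ℝ) < #s := by exact_mod_cast hs.card_pos
    rw [biUnion_insert, card_insert_of_notMem hj, sum_insert hj, Nat.cast_succ, add_comm (#s : ℝ)]
    refine (hρ.flipEnergy_union_le hp one_pos hcard hdisj).trans ?_
    rw [Real.one_rpow, div_one]
    gcongr
    rwa [div_le_iff₀' (by positivity)]

lemma flipEnergy_le_sum_singleton (hρ : IsPseudometric ρ) (hp : 1 ≤ p) (S : Finset ι) :
    flipEnergy p ρ S ≤ (#S : ℝ) ^ (p - 1) * ∑ i ∈ S, flipEnergy p ρ {i} := by
  simpa using hρ.flipEnergy_biUnion_le hp (t := fun i : ι => {i})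
    (fun _ _ h => disjoint_singleton.2 h) S

lemma flipEnergy_le_edgeEnergy (hρ : IsPseudometric ρ) (hp : 1 ≤ p) (S : Finset ι) :
    flipEnergy p ρ S ≤ edgeEnergy p ρ := by
  have hedges : ∑ i ∈ S, flipEnergy p ρ {i} ≤ ∑ i, flipEnergy p ρ {i} :=
    sum_le_univ_sum_of_nonneg fun _ => hρ.flipEnergy_nonneg _
  have hcard : (#S : ℝ) ^ (p - 1) ≤ (Fintype.card ι : ℝ) ^ (p - 1) :=
    Real.rpow_le_rpow (Nat.cast_nonneg _) (by exact_mod_cast card_le_univ S) (by linarith)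
  exact (hρ.flipEnergy_le_sum_singleton hp S).trans
    (mul_le_mul hcard hedges (sum_nonneg fun _ _ => hρ.flipEnergy_nonneg _) (by positivity))

lemma antipodalEnergy_le_edgeEnergy (hρ : IsPseudometric ρ) (hp : 1 ≤ p) :
    antipodalEnergy p ρ ≤ edgeEnergy p ρ :=
  hρ.flipEnergy_le_edgeEnergy hp univ

end IsPseudometric

end Subadditivity

section Subcube

variable {ι κ : Type*} [DecidableEq ι] [Fintype κ] [DecidableEq κ] {t : κ → Finset ι}

/-- The `κ`-dimensional subcube of the `ι`-cube with base point `ε` whose `j`-th coordinate flips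
the whole block `t j`; the blocks are meant to be disjoint. -/
def subcube (t : κ → Finset ι) (ε : ι → Bool) (δ : κ → Bool) : ι → Bool :=
  flipSet (({j | δ j = true} : Finset κ).biUnion t) ε

lemma subcube_flipSet (ht : Pairwise (Disjoint on t)) (ε : ι → Bool) (δ : κ → Bool)
    (S : Finset κ) : subcube t ε (flipSet S δ) = flipSet (S.biUnion t) (subcube t ε δ) := by
  funext i
  by_cases hi : ∃ j, i ∈ t j
  · obtain ⟨j, hj⟩ := hi
    have hunique (l : κ) : i ∈ t l ↔ l = j :=
      ⟨fun hl => by_contra fun hne => Finset.disjoint_left.1 (ht hne) hl hj, fun h => h ▸ hj⟩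
    by_cases hS : j ∈ S <;> by_cases hδ : δ j <;> simp [subcube, flipSet, hunique, hS, hδ]
  · push Not at hi
    simp [subcube, flipSet, hi]

variable [Fintype ι] (p : ℝ) (ρ : (ι → Bool) → (ι → Bool) → ℝ)

-- Every vertex `δ` of the subcube contributes the same amount, as the base point moves over the
-- whole cube.
lemma sum_flipEnergy_subcube (ht : Pairwise (Disjoint on t)) (S : Finset κ) :
    ∑ ε, flipEnergy p (ρ on subcube t ε) S =
      2 ^ Fintype.card κ * flipEnergy p ρ (S.biUnion t) := by
  simp only [flipEnergy, Function.onFun, subcube_flipSet ht]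
  rw [sum_comm]
  have hvertex (δ : κ → Bool) :
      ∑ ε, ρ (subcube t ε δ) (flipSet (S.biUnion t) (subcube t ε δ)) ^ p =
        flipEnergy p ρ (S.biUnion t) :=
    sum_comp_flipSet _ fun ε => ρ ε (flipSet (S.biUnion t) ε) ^ p
  simp [hvertex, flipEnergy]

lemma sum_antipodalEnergy_subcube (ht : Pairwise (Disjoint on t)) :
    ∑ ε, antipodalEnergy p (ρ on subcube t ε) =
      2 ^ Fintype.card κ * flipEnergy p ρ (univ.biUnion t) :=
  sum_flipEnergy_subcube p ρ ht univ

lemma sum_edgeEnergy_subcube (ht : Pairwise (Disjoint on t)) :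
    ∑ ε, edgeEnergy p (ρ on subcube t ε) =
      2 ^ Fintype.card κ * ((Fintype.card κ : ℝ) ^ (p - 1) * ∑ j, flipEnergy p ρ (t j)) := by
  simp only [edgeEnergy, ← mul_sum]
  rw [sum_comm]
  simp only [sum_flipEnergy_subcube p ρ ht, singleton_biUnion, ← mul_sum]
  ring

end Subcube

/-! ### Rigidity and stability of the Hamming metric -/

section Rigidity

variable {ι : Type*} [Fintype ι]

/-- The normalised Hamming metric of a cube with an arbitrary finite set `ι` of coordinates, where
`hdist` is limited to `Fin n`. -/
def normHammingDist (x y : ι → Bool) : ℝ := hammingDist x y / Fintype.card ι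

lemma normHammingDist_pos {x y : ι → Bool} (h : x ≠ y) : 0 < normHammingDist x y := by
  obtain ⟨i, -⟩ := Function.ne_iff.1 h
  have : Nonempty ι := ⟨i⟩
  exact div_pos (by exact_mod_cast hammingDist_pos.2 h) (by exact_mod_cast Fintype.card_pos)

variable [DecidableEq ι] {p : ℝ} {ρ : (ι → Bool) → (ι → Bool) → ℝ}

lemma normHammingDist_flipSet (S : Finset ι) (ε : ι → Bool) :
    normHammingDist ε (flipSet S ε) = #S / Fintype.card ι := by
  rw [normHammingDist, hammingDist_flipSet]

namespace IsPseudometric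

variable (hρ : IsPseudometric ρ) (hp : 1 < p) (hE : edgeEnergy p ρ ≤ antipodalEnergy p ρ)

include hρ hp hE

lemma antipode_eq_card_mul_edge (x : ι → Bool) (i : ι) :
    ρ x (flipSet univ x) = Fintype.card ι * ρ x (flipSet {i} x) := by
  rcases ({i}ᶜ : Finset ι).eq_empty_or_nonempty with hempty | hne
  · have huniv : univ = {i} := by rw [← compl_inj_iff, hempty, compl_univ]
    rw [← card_univ, huniv, card_singleton, Nat.cast_one, one_mul]
  have hcompl : (0 : ℝ) < #{i}ᶜ := by exact_mod_cast hne.card_pos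
  have hcard : (1 : ℝ) + #{i}ᶜ = Fintype.card ι := by
    exact_mod_cast (card_add_card_compl {i} : #{i} + _ = _)
  have hrest : flipEnergy p ρ {i}ᶜ / (#{i}ᶜ : ℝ) ^ (p - 1) ≤ ∑ l ∈ {i}ᶜ, flipEnergy p ρ {l} := by
    rw [div_le_iff₀' (by positivity)]
    exact hρ.flipEnergy_le_sum_singleton hp.le _
  have hext : (1 + #{i}ᶜ : ℝ) ^ (p - 1) *
      (flipEnergy p ρ {i} / 1 ^ (p - 1) + flipEnergy p ρ {i}ᶜ / (#{i}ᶜ : ℝ) ^ (p - 1)) ≤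
        flipEnergy p ρ ({i} ∪ {i}ᶜ) := by
    rw [union_compl]
    refine le_trans ?_ hE
    rw [edgeEnergy, ← sum_add_sum_compl {i}, sum_singleton, hcard, Real.one_rpow, div_one]
    gcongr
  have := hρ.flipSet_union_eq_of_le_flipEnergy hp one_pos hcompl disjoint_compl_right hext x
  rwa [union_compl, hcard, div_one] at this

lemma antipode_eq_antipode (x y : ι → Bool) : ρ x (flipSet univ x) = ρ y (flipSet univ y) := by
  have hstep (z : ι → Bool) (i : ι) :
      ρ (flipSet {i} z) (flipSet univ (flipSet {i} z)) = ρ z (flipSet univ z) := by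
    rw [antipode_eq_card_mul_edge hρ hp hE _ i, antipode_eq_card_mul_edge hρ hp hE _ i,
      flipSet_involutive, hρ.symm]
  have hflip (S : Finset ι) (z : ι → Bool) :
      ρ (flipSet S z) (flipSet univ (flipSet S z)) = ρ z (flipSet univ z) := by
    induction S using Finset.cons_induction generalizing z with
    | empty => rw [flipSet_empty]
    | cons i S hi ih =>
      rw [cons_eq_insert, insert_eq, flipSet_union (disjoint_singleton_left.2 hi), ih, hstep]
  rw [← hflip _ x, flipSet_filter_ne]

lemma eq_antipode_mul_normHammingDist (x y : ι → Bool) :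
    ρ x y = ρ x (flipSet univ x) * normHammingDist x y := by
  rcases isEmpty_or_nonempty ι with hι | hι
  · simp [Subsingleton.elim y x, hρ.self, normHammingDist]
  have hcard : (0 : ℝ) < Fintype.card ι := by exact_mod_cast Fintype.card_pos
  set r := ρ x (flipSet univ x) with hr
  have hedge (ε : ι → Bool) (i : ι) : ρ ε (flipSet {i} ε) ≤ r / Fintype.card ι := by
    rw [le_div_iff₀' hcard, ← antipode_eq_card_mul_edge hρ hp hE ε i,
      antipode_eq_antipode hρ hp hE ε x]
  suffices h : ∀ S : Finset ι, ρ x (flipSet S x) = r * normHammingDist x (flipSet S x) by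
    rw [← flipSet_filter_ne x y, ← h]
  intro S
  have hupper := hρ.flipSet_le_card_mul hedge S x
  have hcompl := hρ.flipSet_le_card_mul hedge Sᶜ (flipSet S x)
  have hsplit := hρ.flipSet_union_le (disjoint_compl_right (a := S)) x
  have hadd : (#S : ℝ) + #Sᶜ = Fintype.card ι := by exact_mod_cast card_add_card_compl S
  rw [union_compl, ← hr] at hsplit
  rw [normHammingDist_flipSet, mul_div_left_comm]
  refine hupper.antisymm ?_
  have : r = #S * (r / Fintype.card ι) + #Sᶜ * (r / Fintype.card ι) := by
    rw [← add_mul, hadd]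
    field_simp
  linarith

omit hE in
lemma eq_normHammingDist_of_two_pow_le_antipodalEnergy
    (hE₁ : edgeEnergy p ρ = 2 ^ Fintype.card ι)
    (hE₂ : 2 ^ Fintype.card ι ≤ antipodalEnergy p ρ) (x y : ι → Bool) :
    ρ x y = normHammingDist x y := by
  have hext := hE₁.trans_le hE₂
  have htotal : antipodalEnergy p ρ = 2 ^ Fintype.card ι * ρ x (flipSet univ x) ^ p := by
    simp [antipodalEnergy, flipEnergy, fun ε => antipode_eq_antipode hρ hp hext ε x]
  have hpow : ρ x (flipSet univ x) ^ p = 1 := by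
    rw [(hρ.antipodalEnergy_le_edgeEnergy hp.le).antisymm hext, hE₁] at htotal
    exact (mul_eq_left₀ (by positivity)).1 htotal.symm
  have hone : ρ x (flipSet univ x) = 1 := (Real.rpow_left_inj (hρ.nonneg _ _) zero_le_one
    (by linarith)).1 (hpow.trans (Real.one_rpow p).symm)
  rw [eq_antipode_mul_normHammingDist hρ hp hext x y, hone, one_mul]

end IsPseudometric

end Rigidity

section Stability

variable {ι : Type*} [Fintype ι]

/-- `ρ` is within a factor `D` of `a` times the normalised Hamming metric. -/
def IsAlmostHamming (D a : ℝ) (ρ : (ι → Bool) → (ι → Bool) → ℝ) : Prop :=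
  ∀ x y, a / D * normHammingDist x y ≤ ρ x y ∧ ρ x y ≤ a * D * normHammingDist x y

lemma IsAlmostHamming.of_smul {D a r : ℝ} {ρ : (ι → Bool) → (ι → Bool) → ℝ} (hr : 0 < r)
    (h : IsAlmostHamming D a (r⁻¹ • ρ)) : IsAlmostHamming D (r * a) ρ := by
  intro x y
  obtain ⟨hlower, hupper⟩ := h x y
  simp only [Pi.smul_apply, smul_eq_mul, le_inv_mul_iff₀ hr, inv_mul_le_iff₀ hr] at hlower hupper
  exact ⟨hlower.trans_eq' (by ring), hupper.trans_eq (by ring)⟩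

variable [DecidableEq ι] {p : ℝ} {ρ : (ι → Bool) → (ι → Bool) → ℝ}

lemma IsPseudometric.rpow_le_edgeEnergy (hρ : IsPseudometric ρ) (hp : 1 ≤ p) (x y : ι → Bool) :
    ρ x y ^ p ≤ edgeEnergy p ρ := by
  rw [← flipSet_filter_ne x y]
  exact (single_le_sum (f := fun ε => ρ ε (flipSet {i | x i ≠ y i} ε) ^ p)
    (fun _ _ => Real.rpow_nonneg (hρ.nonneg _ _) _) (mem_univ x)).trans
      (hρ.flipEnergy_le_edgeEnergy hp _)

lemma continuous_edgeEnergy (hp : 0 ≤ p) :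
    Continuous fun ρ : (ι → Bool) → (ι → Bool) → ℝ => edgeEnergy p ρ :=
  continuous_const.mul (continuous_finsetSum _ fun _ _ => continuous_flipEnergy hp _)

variable (ι) in
lemma isCompact_setOf_edgeEnergy_eq (hp : 1 ≤ p) (E : ℝ) :
    IsCompact {ρ : (ι → Bool) → (ι → Bool) → ℝ | IsPseudometric ρ ∧ edgeEnergy p ρ = E} := by
  refine Metric.isCompact_of_isClosed_isBounded ((isClosed_setOf_isPseudometric _).inter
    (isClosed_eq (continuous_edgeEnergy (by linarith)) continuous_const)) ?_
  refine (Metric.isBounded_Icc 0 fun _ _ => E ^ p⁻¹).subset ?_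
  rintro ρ ⟨hρ, rfl⟩
  refine ⟨fun x y => hρ.nonneg x y, fun x y => ?_⟩
  exact (Real.le_rpow_inv_iff_of_pos (hρ.nonneg x y) hρ.edgeEnergy_nonneg (by linarith)).2
    (hρ.rpow_le_edgeEnergy hp x y)

-- The normalised pseudometrics that are not almost Hamming form a compact set, on which the
-- antipodal energy stays away from its maximum `2 ^ card ι` by rigidity.
variable (ι) in
lemma exists_forall_isAlmostHamming_of_normalized (hp : 1 < p) {D : ℝ} (hD : 1 < D) :
    ∃ θ < 1, ∀ ρ : (ι → Bool) → (ι → Bool) → ℝ, IsPseudometric ρ →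
      edgeEnergy p ρ = 2 ^ Fintype.card ι → θ * 2 ^ Fintype.card ι < antipodalEnergy p ρ →
        IsAlmostHamming D 1 ρ := by
  let close : Set ((ι → Bool) → (ι → Bool) → ℝ) := {ρ | ∀ x y, x ≠ y →
    ρ x y ∈ Set.Ioo (D⁻¹ * normHammingDist x y) (D * normHammingDist x y)}
  have hfar : IsCompact ({ρ | IsPseudometric ρ ∧ edgeEnergy p ρ = 2 ^ Fintype.card ι} \ close) :=
    (isCompact_setOf_edgeEnergy_eq ι hp.le _).diff (isOpen_setOf_forall_ne_mem_Ioo _ _)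
  have hlt : ∀ ρ ∈ {ρ | IsPseudometric ρ ∧ edgeEnergy p ρ = 2 ^ Fintype.card ι} \ close,
      antipodalEnergy p ρ / 2 ^ Fintype.card ι < 1 := by
    rintro ρ ⟨⟨hρ, hE⟩, hρclose⟩
    rw [div_lt_one (by positivity)]
    by_contra! hge
    refine hρclose fun x y hxy => ?_
    have := normHammingDist_pos hxy
    rw [hρ.eq_normHammingDist_of_two_pow_le_antipodalEnergy hp hE hge]
    exact ⟨mul_lt_of_lt_one_left this (inv_lt_one_of_one_lt₀ hD), lt_mul_of_one_lt_left this hD⟩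
  obtain ⟨θ, hθ, hmax⟩ := hfar.exists_forall_le' (α := ℝᵒᵈ)
    ((continuous_flipEnergy (by linarith) univ).div_const _).continuousOn hlt
  refine ⟨θ, hθ, fun ρ hρ hE hlarge => ?_⟩
  have hρclose : ρ ∈ close := by
    by_contra hnot
    exact hlarge.not_ge ((div_le_iff₀ (by positivity)).1 (hmax ρ ⟨⟨hρ, hE⟩, hnot⟩))
  intro x y
  rcases eq_or_ne x y with rfl | hxy
  · simp [hρ.self, normHammingDist]
  · rw [one_div, one_mul]
    exact (hρclose x y hxy).imp le_of_lt le_of_lt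

/-- The factor `a` for which `a` times the normalised Hamming metric has the edge energy of `ρ`. -/
def edgeScale (p : ℝ) (ρ : (ι → Bool) → (ι → Bool) → ℝ) : ℝ :=
  (edgeEnergy p ρ / 2 ^ Fintype.card ι) ^ p⁻¹

lemma edgeScale_nonneg (hρ : IsPseudometric ρ) : 0 ≤ edgeScale p ρ :=
  Real.rpow_nonneg (div_nonneg hρ.edgeEnergy_nonneg (by positivity)) _

lemma edgeScale_pos (hE : 0 < edgeEnergy p ρ) : 0 < edgeScale p ρ := by
  unfold edgeScale
  positivity

lemma edgeScale_rpow (hp : p ≠ 0) (hρ : IsPseudometric ρ) :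
    edgeScale p ρ ^ p = edgeEnergy p ρ / 2 ^ Fintype.card ι :=
  Real.rpow_inv_rpow (div_nonneg hρ.edgeEnergy_nonneg (by positivity)) hp

lemma IsPseudometric.edgeScale_mul_le_edgeScale (hρ : IsPseudometric ρ)
    {σ : (ι → Bool) → (ι → Bool) → ℝ} (hσ : IsPseudometric σ) (hp : 0 < p) {c : ℝ} (hc : 0 ≤ c)
    (h : c ^ p * edgeEnergy p ρ ≤ edgeEnergy p σ) : edgeScale p ρ * c ≤ edgeScale p σ := by
  rw [← Real.rpow_le_rpow_iff (mul_nonneg (edgeScale_nonneg hρ) hc) (edgeScale_nonneg hσ) hp,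
    Real.mul_rpow (edgeScale_nonneg hρ) hc, edgeScale_rpow hp.ne' hρ, edgeScale_rpow hp.ne' hσ,
    div_mul_eq_mul_div, mul_comm]
  gcongr

lemma IsPseudometric.edgeEnergy_pos_of_mul_lt_antipodalEnergy (hρ : IsPseudometric ρ) (hp : 1 ≤ p)
    {θ : ℝ} (h : θ * edgeEnergy p ρ < antipodalEnergy p ρ) : 0 < edgeEnergy p ρ := by
  refine hρ.edgeEnergy_nonneg.lt_of_ne' fun hzero => ?_
  rw [hzero, mul_zero] at h
  exact (hzero ▸ hρ.antipodalEnergy_le_edgeEnergy hp).not_gt h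

variable (ι) in
lemma exists_forall_isAlmostHamming_edgeScale (hp : 1 < p) {D : ℝ} (hD : 1 < D) :
    ∃ θ < 1, ∀ ρ : (ι → Bool) → (ι → Bool) → ℝ, IsPseudometric ρ →
      θ * edgeEnergy p ρ < antipodalEnergy p ρ → IsAlmostHamming D (edgeScale p ρ) ρ := by
  obtain ⟨θ, hθ, hstable⟩ := exists_forall_isAlmostHamming_of_normalized ι hp hD
  refine ⟨θ, hθ, fun ρ hρ hlarge => ?_⟩
  have hE := hρ.edgeEnergy_pos_of_mul_lt_antipodalEnergy hp.le hlarge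
  have ha := edgeScale_pos hE
  have hinv : (edgeScale p ρ)⁻¹ ^ p = 2 ^ Fintype.card ι / edgeEnergy p ρ := by
    rw [Real.inv_rpow ha.le, edgeScale_rpow (by linarith) hρ, inv_div]
  rw [← mul_one (edgeScale p ρ)]
  refine .of_smul ha (hstable _ (hρ.smul (by positivity)) ?_ ?_)
  · rw [edgeEnergy_smul hρ (by positivity), hinv, div_mul_cancel₀ _ hE.ne']
  · rw [antipodalEnergy_smul hρ (by positivity), hinv, div_mul_eq_mul_div, lt_div_iff₀ hE]
    calc θ * 2 ^ Fintype.card ι * edgeEnergy p ρ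
        = 2 ^ Fintype.card ι * (θ * edgeEnergy p ρ) := by ring
      _ < 2 ^ Fintype.card ι * antipodalEnergy p ρ := by gcongr

end Stability

/-! ### Admissible constants -/

/-- All maps of the family `𝓕` are `lam`-Lipschitz. -/
def IsLipschitzFamily (lam : ℝ) (𝓕 : Set MetricMap) : Prop :=
  ∀ G ∈ 𝓕, ∀ x y : G.X, dist (G.F x) (G.F y) ≤ lam * dist x y

/-- The inequality that defines `b_{p,n}(𝓕)` holds with constant `b`, for the cube with an arbitrary
finite set `ι` of coordinates in place of `Fin n`. Both sides are multiplied by `2 ^ n`. -/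
def IsAdmissible (𝓕 : Set MetricMap) (p b : ℝ) (ι : Type*) [Fintype ι] [DecidableEq ι] : Prop :=
  ∀ G ∈ 𝓕, ∀ f : (ι → Bool) → G.X,
    antipodalEnergy p (dist on G.F ∘ f) ≤ b ^ p * edgeEnergy p (dist on f)

section Admissible

variable {𝓕 : Set MetricMap} {p b lam : ℝ} {ι κ : Type*} [Fintype ι] [DecidableEq ι] [Fintype κ]
  [DecidableEq κ]

lemma IsLipschitzFamily.antipodalEnergy_le (hLip : IsLipschitzFamily lam 𝓕) (hlam : 0 ≤ lam)
    (hp : 0 ≤ p) {G : MetricMap} (hG : G ∈ 𝓕) (f : (ι → Bool) → G.X) :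
    antipodalEnergy p (dist on G.F ∘ f) ≤ lam ^ p * antipodalEnergy p (dist on f) := by
  rw [← antipodalEnergy_smul (isPseudometric_dist_on f) hlam]
  exact sum_le_sum fun ε _ => Real.rpow_le_rpow dist_nonneg (hLip G hG _ _) hp

lemma IsLipschitzFamily.isAdmissible (hLip : IsLipschitzFamily lam 𝓕) (hlam : 0 ≤ lam)
    (hp : 1 ≤ p) : IsAdmissible 𝓕 p lam ι := fun G hG f =>
  (hLip.antipodalEnergy_le hlam (by linarith) hG f).trans (mul_le_mul_of_nonneg_left
    ((isPseudometric_dist_on f).antipodalEnergy_le_edgeEnergy hp) (by positivity))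

namespace IsAdmissible

lemma mono (h : IsAdmissible 𝓕 p b ι) {b' : ℝ} (hp : 0 ≤ p) (hb : 0 ≤ b) (hbb' : b ≤ b') :
    IsAdmissible 𝓕 p b' ι := fun G hG f =>
  (h G hG f).trans (mul_le_mul_of_nonneg_right (Real.rpow_le_rpow hb hbb' hp)
    (isPseudometric_dist_on f).edgeEnergy_nonneg)

lemma flipEnergy_biUnion_le (h : IsAdmissible 𝓕 p b κ) {G : MetricMap} (hG : G ∈ 𝓕)
    (f : (ι → Bool) → G.X) {t : κ → Finset ι} (ht : Pairwise (Disjoint on t)) :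
    flipEnergy p (dist on G.F ∘ f) (univ.biUnion t) ≤
      b ^ p * ((Fintype.card κ : ℝ) ^ (p - 1) * ∑ j, flipEnergy p (dist on f) (t j)) := by
  have hsum : ∑ ε, antipodalEnergy p ((dist on G.F ∘ f) on subcube t ε) ≤
      ∑ ε, b ^ p * edgeEnergy p ((dist on f) on subcube t ε) :=
    sum_le_sum fun ε _ => h G hG (f ∘ subcube t ε)
  rw [← mul_sum, sum_antipodalEnergy_subcube p _ ht, sum_edgeEnergy_subcube p _ ht,
    mul_left_comm] at hsum
  exact le_of_mul_le_mul_left hsum (by positivity)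

lemma of_card_le_mul [Nonempty ι] (h : IsAdmissible 𝓕 p b κ) (hp : 1 ≤ p) (hb : 0 ≤ b) {r : ℕ}
    (hcard : Fintype.card ι ≤ Fintype.card κ * r) :
    IsAdmissible 𝓕 p ((Fintype.card κ * r / Fintype.card ι : ℝ) ^ (1 - 1 / p) * b) ι := by
  intro G hG f
  have hι : (0 : ℝ) < Fintype.card ι := by exact_mod_cast Fintype.card_pos
  obtain ⟨e⟩ : Nonempty (ι ↪ κ × Fin r) :=
    Function.Embedding.nonempty_of_card_le (by simpa using hcard)
  let block (j : κ) : Finset ι := {i | (e i).1 = j}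
  have hdisj : Pairwise (Disjoint on block) := fun j l hjl =>
    disjoint_filter.2 fun i _ hj hl => hjl (hj.symm.trans hl)
  have hblock (j : κ) : #(block j) ≤ r := by
    have hinj : Set.InjOn (fun i => (e i).2) (block j) := fun i hi l hl hil => by
      simp only [block, coe_filter, mem_univ, true_and, Set.mem_ofPred_eq] at hi hl
      exact e.injective (Prod.ext (hi.trans hl.symm) hil)
    simpa using card_le_card_of_injOn _ (fun i _ => mem_univ (e i).2) hinj
  have hedges : ∑ j, flipEnergy p (dist on f) (block j) ≤
      (r : ℝ) ^ (p - 1) * ∑ i, flipEnergy p (dist on f) {i} := by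
    rw [← sum_fiberwise univ (fun i => (e i).1), mul_sum]
    refine sum_le_sum fun j _ =>
      ((isPseudometric_dist_on f).flipEnergy_le_sum_singleton hp _).trans ?_
    have := Real.rpow_le_rpow (Nat.cast_nonneg _) (Nat.cast_le (α := ℝ).2 (hblock j))
      (by linarith : 0 ≤ p - 1)
    exact mul_le_mul_of_nonneg_right this
      (sum_nonneg fun _ _ => (isPseudometric_dist_on f).flipEnergy_nonneg _)
  have huniv : univ.biUnion block = univ := by
    ext i
    simp [block]
  calc antipodalEnergy p (dist on G.F ∘ f)
      ≤ b ^ p * ((Fintype.card κ : ℝ) ^ (p - 1) * ∑ j, flipEnergy p (dist on f) (block j)) := by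
        rw [antipodalEnergy, ← huniv]
        exact h.flipEnergy_biUnion_le hG f hdisj
    _ ≤ b ^ p * ((Fintype.card κ : ℝ) ^ (p - 1) *
          ((r : ℝ) ^ (p - 1) * ∑ i, flipEnergy p (dist on f) {i})) := by gcongr
    _ = _ := by
        rw [edgeEnergy, Real.mul_rpow (by positivity) hb, ← Real.rpow_mul (by positivity),
          one_sub_mul, one_div_mul_cancel (by linarith), Real.div_rpow (by positivity) hι.le,
          Real.mul_rpow (Nat.cast_nonneg _) (Nat.cast_nonneg _)]
        field_simp

end IsAdmissible

end Admissible

section BConst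

variable {𝓕 : Set MetricMap} {p b lam : ℝ} {n : ℕ}

lemma flipCoord_eq_flipSet (i : Fin n) (ε : Fin n → Bool) : flipCoord i ε = flipSet {i} ε := by
  funext j
  rcases eq_or_ne j i with rfl | h <;> simp_all [flipCoord, flipSet]

lemma negCube_eq_flipSet (ε : Fin n → Bool) : negCube ε = flipSet univ ε := by
  funext i
  simp [negCube, flipSet]

lemma bConst_eq_sInf (𝓕 : Set MetricMap) (p : ℝ) (n : ℕ) :
    bConst 𝓕 p n = sInf {b : ℝ | 0 < b ∧ IsAdmissible 𝓕 p b (Fin n)} := by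
  simp only [bConst, IsAdmissible, cubeE, negCube_eq_flipSet, flipCoord_eq_flipSet,
    antipodalEnergy, edgeEnergy, flipEnergy, Function.onFun, Function.comp_apply, ← sum_div,
    mul_div_assoc', Fintype.card_fin, mul_assoc,
    div_le_div_iff_of_pos_right (show (0 : ℝ) < 2 ^ n by positivity)]

lemma bConst_nonneg (𝓕 : Set MetricMap) (p : ℝ) (n : ℕ) : 0 ≤ bConst 𝓕 p n := by
  rw [bConst_eq_sInf]
  exact Real.sInf_nonneg fun b hb => hb.1.le

lemma IsAdmissible.bConst_le (h : IsAdmissible 𝓕 p b (Fin n)) (hb : 0 < b) : bConst 𝓕 p n ≤ b := by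
  rw [bConst_eq_sInf]
  exact csInf_le ⟨0, fun b hb => hb.1.le⟩ ⟨hb, h⟩

-- Partitioning `n` coordinates into `card κ` blocks of almost equal size loses a factor that tends
-- to `1` as `n → ∞`.
lemma IsAdmissible.limsup_bConst_le {κ : Type*} [Fintype κ] [DecidableEq κ] [Nonempty κ]
    (h : IsAdmissible 𝓕 p b κ) (hp : 1 ≤ p) (hb : 0 < b) : limsup (bConst 𝓕 p) atTop ≤ b := by
  have hκ : (0 : ℝ) < Fintype.card κ := by exact_mod_cast Fintype.card_pos
  let blockSize (n : ℕ) : ℕ := ⌈(n / Fintype.card κ : ℝ)⌉₊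
  let loss (n : ℕ) : ℝ := Fintype.card κ * blockSize n / n
  have hcover (n : ℕ) : (n : ℝ) ≤ Fintype.card κ * blockSize n :=
    (div_le_iff₀' hκ).1 (Nat.le_ceil _)
  have hloss : Tendsto loss atTop (𝓝 1) := by
    refine ((tendsto_nat_ceil_div_atTop (R := ℝ)).comp
      (tendsto_natCast_atTop_atTop.atTop_div_const hκ)).congr fun n => ?_
    simp only [loss, blockSize, Function.comp_apply, div_div_eq_mul_div, mul_comm]
  have hlim : Tendsto (fun n => loss n ^ (1 - 1 / p) * b) atTop (𝓝 b) := by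
    simpa using (hloss.rpow_const (Or.inl one_ne_zero)).mul_const b
  have hle : ∀ᶠ n in atTop, bConst 𝓕 p n ≤ loss n ^ (1 - 1 / p) * b := by
    filter_upwards [eventually_gt_atTop 0] with n hn
    have : NeZero n := ⟨hn.ne'⟩
    have hn' : (0 : ℝ) < n := by exact_mod_cast hn
    have hpos : 0 < loss n := div_pos (hn'.trans_le (hcover n)) hn'
    have := h.of_card_le_mul (ι := Fin n) (r := blockSize n) hp hb.le
      (by rw [Fintype.card_fin]; exact_mod_cast hcover n)
    rw [Fintype.card_fin] at this
    exact this.bConst_le (mul_pos (Real.rpow_pos_of_pos hpos _) hb)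
  exact (limsup_le_limsup hle (isCoboundedUnder_le_of_le atTop (bConst_nonneg 𝓕 p))
    hlim.isBoundedUnder_le).trans_eq hlim.limsup_eq

namespace IsLipschitzFamily

variable (hLip : IsLipschitzFamily lam 𝓕) (hlam : 0 < lam) (hp : 1 ≤ p)

include hLip hlam hp

lemma bConst_le (n : ℕ) : bConst 𝓕 p n ≤ lam :=
  (hLip.isAdmissible hlam.le hp).bConst_le hlam

lemma isAdmissible_of_bConst_lt (hb : bConst 𝓕 p n < b) : IsAdmissible 𝓕 p b (Fin n) := by
  rw [bConst_eq_sInf] at hb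
  have hne : {b : ℝ | 0 < b ∧ IsAdmissible 𝓕 p b (Fin n)}.Nonempty :=
    ⟨lam, hlam, hLip.isAdmissible hlam.le hp⟩
  obtain ⟨b', ⟨hb'pos, hb'⟩, hlt⟩ := exists_lt_of_csInf_lt hne hb
  exact hb'.mono (by linarith) hb'pos.le hlt.le

end IsLipschitzFamily

end BConst

/-! ### Nearly extremal subcubes -/

section Layers

/-- The coordinates of a product whose first component is `j`. -/
def layer {κ τ : Type*} [Fintype τ] (j : κ) : Finset (κ × τ) := {j} ×ˢ univ

/-- The coordinates of a threefold product whose first two components are `j` and `l`. -/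
def block {κ μ τ : Type*} [Fintype τ] (j : κ) (l : μ) : Finset (κ × μ × τ) := {j} ×ˢ layer l

variable {κ μ τ : Type*} [Fintype τ]

lemma pairwise_disjoint_layer : Pairwise (Disjoint on (layer : κ → Finset (κ × τ))) :=
  fun _ _ h => disjoint_product.2 (Or.inl (disjoint_singleton.2 h))

lemma pairwise_disjoint_block (j : κ) :
    Pairwise (Disjoint on (block j : μ → Finset (κ × μ × τ))) :=
  fun _ _ h => disjoint_product.2 (Or.inr (pairwise_disjoint_layer h))

variable [DecidableEq κ] [DecidableEq τ]

lemma biUnion_layer [Fintype κ] : univ.biUnion (layer : κ → Finset (κ × τ)) = univ := by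
  ext x
  simp [layer]

variable [DecidableEq μ]

lemma biUnion_block [Fintype μ] (j : κ) :
    univ.biUnion (block j) = (layer j : Finset (κ × μ × τ)) := by
  ext x
  simp [block, layer]

lemma biUnion_singleton_eq_block (j : κ) (l : μ) :
    univ.biUnion (fun s : τ => {(j, l, s)}) = block j l := by
  ext x
  simp [block, layer, Prod.ext_iff, eq_comm]

end Layers

section Box

variable {κ μ τ : Type*} [Fintype κ] [DecidableEq κ] [Fintype μ] [DecidableEq μ] [Fintype τ]
  [DecidableEq τ] {p : ℝ}

lemma edgeEnergy_box (p : ℝ) (ρ : (κ × μ × τ → Bool) → (κ × μ × τ → Bool) → ℝ) :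
    edgeEnergy p ρ = (Fintype.card κ : ℝ) ^ (p - 1) * ((Fintype.card μ : ℝ) ^ (p - 1) *
      ((Fintype.card τ : ℝ) ^ (p - 1) * ∑ i, flipEnergy p ρ {i})) := by
  simp only [edgeEnergy, Fintype.card_prod, Nat.cast_mul, Real.mul_rpow, Nat.cast_nonneg,
    mul_nonneg, mul_assoc]

lemma IsPseudometric.antipodalEnergy_le_sum_layer {ρ : (κ × τ → Bool) → (κ × τ → Bool) → ℝ}
    (hρ : IsPseudometric ρ) (hp : 1 ≤ p) :
    antipodalEnergy p ρ ≤ (Fintype.card κ : ℝ) ^ (p - 1) * ∑ j, flipEnergy p ρ (layer j) := by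
  rw [antipodalEnergy, ← biUnion_layer]
  exact hρ.flipEnergy_biUnion_le hp pairwise_disjoint_layer univ

lemma IsPseudometric.sum_flipEnergy_block_le
    {ρ : (κ × μ × τ → Bool) → (κ × μ × τ → Bool) → ℝ} (hρ : IsPseudometric ρ) (hp : 1 ≤ p) :
    ∑ j, ∑ l, flipEnergy p ρ (block j l) ≤
      (Fintype.card τ : ℝ) ^ (p - 1) * ∑ i, flipEnergy p ρ {i} := by
  simp only [Fintype.sum_prod_type, mul_sum (Finset.univ : Finset κ),
    mul_sum (Finset.univ : Finset μ)]
  refine sum_le_sum fun j _ => sum_le_sum fun l _ => ?_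
  rw [← biUnion_singleton_eq_block, ← card_univ]
  exact hρ.flipEnergy_biUnion_le hp (fun s s' h => by simp [h]) univ

namespace IsAdmissible

variable {𝓕 : Set MetricMap} {b : ℝ} {G : MetricMap}

lemma antipodalEnergy_le_sum_layer (h : IsAdmissible 𝓕 p b κ) (hG : G ∈ 𝓕)
    (f : (κ × τ → Bool) → G.X) :
    antipodalEnergy p (dist on G.F ∘ f) ≤
      b ^ p * ((Fintype.card κ : ℝ) ^ (p - 1) * ∑ j, flipEnergy p (dist on f) (layer j)) := by
  rw [antipodalEnergy, ← biUnion_layer]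
  exact h.flipEnergy_biUnion_le hG f pairwise_disjoint_layer

lemma sum_flipEnergy_block_le (h : IsAdmissible 𝓕 p b τ) (hG : G ∈ 𝓕)
    (f : (κ × μ × τ → Bool) → G.X) :
    ∑ j, ∑ l, flipEnergy p (dist on G.F ∘ f) (block j l) ≤
      b ^ p * ((Fintype.card τ : ℝ) ^ (p - 1) * ∑ i, flipEnergy p (dist on f) {i}) := by
  simp only [Fintype.sum_prod_type, mul_sum (Finset.univ : Finset κ),
    mul_sum (Finset.univ : Finset μ)]
  refine sum_le_sum fun j _ => sum_le_sum fun l _ => ?_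
  rw [← biUnion_singleton_eq_block]
  exact h.flipEnergy_biUnion_le hG f fun s s' h => by simp [h]

end IsAdmissible

end Box

section Extremality

variable {ι κ μ τ : Type*} [Fintype ι] [DecidableEq ι] [Fintype κ] [DecidableEq κ] [Fintype μ]
  [DecidableEq μ] [Fintype τ] [DecidableEq τ] {p : ℝ}

/-- The excess of the antipodal energy of `σ` over `A` times the edge energy of `ρ`, penalised by
`K` times the deficit of each of `ρ` and `σ` in `IsPseudometric.antipodalEnergy_le_edgeEnergy`.
If it is positive and `K` is large, then both deficits are small. -/
def extremality (p A K : ℝ) (ρ σ : (ι → Bool) → (ι → Bool) → ℝ) : ℝ :=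
  antipodalEnergy p σ - A * edgeEnergy p ρ - K * (edgeEnergy p ρ - antipodalEnergy p ρ) -
    K * (edgeEnergy p σ - antipodalEnergy p σ)

lemma sum_extremality_subcube (p A K : ℝ) (ρ σ : (ι → Bool) → (ι → Bool) → ℝ)
    {t : κ → Finset ι} (ht : Pairwise (Disjoint on t)) :
    ∑ ε, extremality p A K (ρ on subcube t ε) (σ on subcube t ε) =
      2 ^ Fintype.card κ * ((1 + K) * flipEnergy p σ (univ.biUnion t) +
        K * flipEnergy p ρ (univ.biUnion t) -
        (Fintype.card κ : ℝ) ^ (p - 1) * ((A + K) * ∑ j, flipEnergy p ρ (t j) +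
          K * ∑ j, flipEnergy p σ (t j))) := by
  simp only [extremality, sum_sub_distrib, ← mul_sum, sum_antipodalEnergy_subcube p _ ht,
    sum_edgeEnergy_subcube p _ ht]
  ring

variable {𝓕 : Set MetricMap} {a b A K : ℝ} {G : MetricMap}

lemma sum_extremality_block_pos (hp : 1 ≤ p) (ha : 0 ≤ a) (hb : 0 < b) (hA : 0 ≤ A) (hK : 0 ≤ K)
    (hκ : IsAdmissible 𝓕 p b κ) (hτ : IsAdmissible 𝓕 p b τ)
    (hab : 0 ≤ a ^ p - A - K * (1 - (a / b) ^ p) - K * (b ^ p - a ^ p)) (hG : G ∈ 𝓕)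
    {f : (κ × μ × τ → Bool) → G.X}
    (hf : a ^ p * edgeEnergy p (dist on f) < antipodalEnergy p (dist on G.F ∘ f)) :
    0 < ∑ j, ∑ ε, extremality p A K ((dist on f) on subcube (block j) ε)
      ((dist on G.F ∘ f) on subcube (block j) ε) := by
  have hX := isPseudometric_dist_on f
  have hY := isPseudometric_dist_on (G.F ∘ f)
  set k := (Fintype.card κ : ℝ) ^ (p - 1)
  set m := (Fintype.card μ : ℝ) ^ (p - 1)
  set P := (Fintype.card τ : ℝ) ^ (p - 1) * ∑ i, flipEnergy p (dist on f) {i}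
  set LX := ∑ j, flipEnergy p (dist on f) (layer j)
  set LY := ∑ j, flipEnergy p (dist on G.F ∘ f) (layer j)
  set BX := ∑ j, ∑ l, flipEnergy p (dist on f) (block j l)
  set BY := ∑ j, ∑ l, flipEnergy p (dist on G.F ∘ f) (block j l)
  have hk : 0 ≤ k := by positivity
  have hm : 0 ≤ m := by positivity
  have hP : 0 ≤ P := mul_nonneg (by positivity) (sum_nonneg fun _ _ => hX.flipEnergy_nonneg _)
  have hE : edgeEnergy p (dist on f) = k * (m * P) := edgeEnergy_box p _
  rw [hE] at hf
  have hLY : a ^ p * (m * P) < LY := by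
    have := hf.trans_le (hY.antipodalEnergy_le_sum_layer hp)
    exact lt_of_mul_lt_mul_left (by linarith) hk
  have hLX : (a / b) ^ p * (m * P) < LX := by
    have := hf.trans_le (hκ.antipodalEnergy_le_sum_layer hG f)
    rw [Real.div_rpow ha hb.le, div_mul_eq_mul_div, div_lt_iff₀' (by positivity)]
    exact lt_of_mul_lt_mul_left (by linarith) hk
  have hBX : m * BX ≤ m * P := mul_le_mul_of_nonneg_left (hX.sum_flipEnergy_block_le hp) hm
  have hBY : m * BY ≤ m * (b ^ p * P) :=
    mul_le_mul_of_nonneg_left (hτ.sum_flipEnergy_block_le hG f) hm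
  simp only [sum_extremality_subcube p A K _ _ (pairwise_disjoint_block _), biUnion_block,
    ← mul_sum, sum_add_distrib, sum_sub_distrib]
  refine mul_pos (by positivity) ?_
  linarith [mul_le_mul_of_nonneg_left hLX.le hK, mul_le_mul_of_nonneg_left hLY.le hK,
    mul_le_mul_of_nonneg_left hBX (add_nonneg hA hK), mul_le_mul_of_nonneg_left hBY hK,
    mul_nonneg hab (mul_nonneg hm hP)]

lemma exists_extremality_pos (hp : 1 ≤ p) (ha : 0 ≤ a) (hb : 0 < b) (hA : 0 ≤ A) (hK : 0 ≤ K)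
    (hκ : IsAdmissible 𝓕 p b κ) (hτ : IsAdmissible 𝓕 p b τ)
    (hab : 0 ≤ a ^ p - A - K * (1 - (a / b) ^ p) - K * (b ^ p - a ^ p))
    (hbox : ¬ IsAdmissible 𝓕 p a (κ × μ × τ)) :
    ∃ G ∈ 𝓕, ∃ g : (μ → Bool) → G.X, 0 < extremality p A K (dist on g) (dist on G.F ∘ g) := by
  simp only [IsAdmissible, not_forall, not_le] at hbox
  obtain ⟨G, hG, f, hf⟩ := hbox
  obtain ⟨j, -, hj⟩ := exists_lt_of_sum_lt
    ((sum_const_zero (s := univ)).trans_lt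
      (sum_extremality_block_pos (A := A) hp ha hb hA hK hκ hτ hab hG hf))
  obtain ⟨ε, -, hε⟩ := exists_lt_of_sum_lt ((sum_const_zero (s := univ)).trans_lt hj)
  exact ⟨G, hG, f ∘ subcube (block j) ε, hε⟩

-- By continuity: for `a = b = β` the displayed expression is `β ^ p - c ^ p > 0`.
lemma exists_lt_lt_and_penalised_pos (hp : 0 < p) {c β : ℝ} (hc : 0 < c) (hcβ : c < β) (K : ℝ) :
    ∃ a b : ℝ, 0 < a ∧ a < β ∧ β < b ∧
      0 < a ^ p - c ^ p - K * (1 - (a / b) ^ p) - K * (b ^ p - a ^ p) := by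
  have hβ : 0 < β := hc.trans hcβ
  let h (t : ℝ) : ℝ := (β - t) ^ p - c ^ p - K * (1 - ((β - t) / (β + t)) ^ p) -
    K * ((β + t) ^ p - (β - t) ^ p)
  have hcont : ContinuousAt h 0 := by
    have hminus := (by fun_prop : ContinuousAt (fun t => β - t) 0)
    have hplus := (by fun_prop : ContinuousAt (fun t => β + t) 0)
    have hquot := hminus.div hplus (by simpa using hβ.ne')
    exact (((hminus.rpow_const (Or.inr hp.le)).sub continuousAt_const).sub (continuousAt_const.mul
      (continuousAt_const.sub (hquot.rpow_const (Or.inr hp.le))))).sub (continuousAt_const.mul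
        ((hplus.rpow_const (Or.inr hp.le)).sub (hminus.rpow_const (Or.inr hp.le))))
  have hzero : 0 < h 0 := by
    simpa [h, div_self hβ.ne'] using Real.rpow_lt_rpow hc.le hcβ hp
  have hnear : ∀ᶠ t in 𝓝[>] (0 : ℝ), 0 < h t ∧ t < β :=
    ((hcont.eventually_const_lt hzero).and (Iio_mem_nhds hβ)).filter_mono nhdsWithin_le_nhds
  obtain ⟨t, ⟨hpos, htβ⟩, ht : 0 < t⟩ := (hnear.and self_mem_nhdsWithin).exists
  exact ⟨β - t, β + t, sub_pos.2 htβ, sub_lt_self _ ht, lt_add_of_pos_right _ ht, hpos⟩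

end Extremality

/-! ### Factorisation of the Hamming cubes -/

section CubeFactors

variable {𝓕 : Set MetricMap} {p b c lam D : ℝ} {ι : Type*} [Fintype ι]

/-- Up to distortion `D`, some map in `𝓕` maps a multiple of the Hamming cube with coordinates `ι`
onto another such multiple, whose scale is at least `c` times as large. -/
def CubeFactors (𝓕 : Set MetricMap) (c D : ℝ) (ι : Type*) [Fintype ι] : Prop :=
  ∃ G ∈ 𝓕, ∃ f : (ι → Bool) → G.X, ∃ a b : ℝ, 0 < a ∧ 0 < b ∧ a * c ≤ b ∧
    IsAlmostHamming D a (dist on f) ∧ IsAlmostHamming D b (dist on G.F ∘ f)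

lemma hdist_eq_normHammingDist (n : ℕ) (x y : Fin n → Bool) :
    hdist n x y = normHammingDist x y := by
  rw [hdist, normHammingDist, hammingDist, Fintype.card_fin]

lemma cConst_eq_sSup (𝓕 : Set MetricMap) : cConst 𝓕 =
    sSup {c : ℝ | 0 < c ∧ ∀ D : ℝ, 1 < D → ∀ n : ℕ, 0 < n → CubeFactors 𝓕 c D (Fin n)} := by
  simp only [cConst, CubeFactors, IsAlmostHamming, hdist_eq_normHammingDist, and_assoc,
    forall_and, Function.onFun, Function.comp_apply]

lemma cConst_nonneg (𝓕 : Set MetricMap) : 0 ≤ cConst 𝓕 := Real.sSup_nonneg fun _ hc => hc.1.le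

variable [DecidableEq ι]

namespace IsAlmostHamming

variable {a : ℝ} {ρ : (ι → Bool) → (ι → Bool) → ℝ} [Nonempty ι]

lemma le_antipodalEnergy (h : IsAlmostHamming D a ρ) (hp : 0 ≤ p) (ha : 0 ≤ a) (hD : 0 ≤ D) :
    2 ^ Fintype.card ι * (a / D) ^ p ≤ antipodalEnergy p ρ := by
  have hantipode (ε : ι → Bool) : a / D ≤ ρ ε (flipSet univ ε) := by
    simpa [normHammingDist_flipSet] using (h ε (flipSet univ ε)).1
  calc 2 ^ Fintype.card ι * (a / D) ^ p = ∑ _ε : ι → Bool, (a / D) ^ p := by simp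
    _ ≤ antipodalEnergy p ρ :=
      sum_le_sum fun ε _ => Real.rpow_le_rpow (by positivity) (hantipode ε) hp

lemma edgeEnergy_le (h : IsAlmostHamming D a ρ) (hρ : IsPseudometric ρ) (hp : 0 ≤ p)
    (ha : 0 ≤ a) (hD : 0 ≤ D) : edgeEnergy p ρ ≤ 2 ^ Fintype.card ι * (a * D) ^ p := by
  have hcard : (0 : ℝ) < Fintype.card ι := by exact_mod_cast Fintype.card_pos
  have hedge (ε : ι → Bool) (i : ι) : ρ ε (flipSet {i} ε) ≤ a * D / Fintype.card ι := by
    simpa [normHammingDist_flipSet, div_eq_mul_inv] using (h ε (flipSet {i} ε)).2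
  calc edgeEnergy p ρ
      ≤ (Fintype.card ι : ℝ) ^ (p - 1) *
          ∑ _i : ι, ∑ _ε : ι → Bool, (a * D / Fintype.card ι) ^ p := by
        unfold edgeEnergy flipEnergy
        gcongr with i _ ε _
        · exact hρ.nonneg _ _
        · exact hedge ε i
    _ = 2 ^ Fintype.card ι * (a * D) ^ p := by
        simp only [sum_const, card_univ, Fintype.card_pi, Fintype.card_bool, prod_const,
          nsmul_eq_mul, Nat.cast_pow, Nat.cast_ofNat, Real.rpow_sub_one hcard.ne',
          Real.div_rpow (mul_nonneg ha hD) hcard.le]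
        field_simp

end IsAlmostHamming

lemma CubeFactors.le_mul_sq_of_isAdmissible [Nonempty ι] (h : CubeFactors 𝓕 c D ι)
    (hb : IsAdmissible 𝓕 p b ι) (hp : 0 < p) (hb0 : 0 ≤ b) (hD : 0 < D) : c ≤ b * D ^ 2 := by
  obtain ⟨G, hG, f, r, s, hr, hs, hrs, hX, hY⟩ := h
  have henergy : 2 ^ Fintype.card ι * (s / D) ^ p ≤
      2 ^ Fintype.card ι * (b * (r * D)) ^ p :=
    calc 2 ^ Fintype.card ι * (s / D) ^ p
        ≤ antipodalEnergy p (dist on G.F ∘ f) := hY.le_antipodalEnergy hp.le hs.le hD.le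
      _ ≤ b ^ p * edgeEnergy p (dist on f) := hb G hG f
      _ ≤ b ^ p * (2 ^ Fintype.card ι * (r * D) ^ p) := by
          gcongr
          exact hX.edgeEnergy_le (isPseudometric_dist_on f) hp.le hr.le hD.le
      _ = 2 ^ Fintype.card ι * (b * (r * D)) ^ p := by
          rw [Real.mul_rpow hb0 (by positivity), mul_left_comm]
  have hscale : s ≤ b * (r * D) * D := by
    rw [← div_le_iff₀ hD]
    exact (Real.rpow_le_rpow_iff (by positivity) (by positivity) hp).1
      (le_of_mul_le_mul_left henergy (by positivity))
  refine le_of_mul_le_mul_left (hrs.trans (hscale.trans_eq ?_)) hr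
  ring

lemma lt_of_mul_sub_lt {θ E A K s : ℝ} (hE : 0 ≤ E) (hK : 0 ≤ K) (hs : s ≤ K * (1 - θ))
    (h : K * (E - A) < s * E) : θ * E < A := by
  by_contra! hA
  refine h.not_ge ?_
  calc s * E ≤ K * (1 - θ) * E := mul_le_mul_of_nonneg_right hs hE
    _ = K * (E - θ * E) := by ring
    _ ≤ K * (E - A) := by gcongr

variable (ι) in
lemma IsLipschitzFamily.exists_forall_cubeFactors_of_extremality_pos
    (hLip : IsLipschitzFamily lam 𝓕) (hlam : 0 ≤ lam) (hp : 1 < p) (hD : 1 < D) :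
    ∃ K, 0 ≤ K ∧ ∀ c, 0 ≤ c → ∀ G ∈ 𝓕, ∀ g : (ι → Bool) → G.X,
      0 < extremality p (c ^ p) K (dist on g) (dist on G.F ∘ g) → CubeFactors 𝓕 c D ι := by
  obtain ⟨θ, hθ, hstable⟩ := exists_forall_isAlmostHamming_edgeScale ι hp hD
  have hθ' : 0 < 1 - θ := sub_pos.2 hθ
  let K := max 1 (lam ^ p) / (1 - θ)
  have hK : K * (1 - θ) = max 1 (lam ^ p) := div_mul_cancel₀ _ hθ'.ne'
  have hK0 : 0 ≤ K := by positivity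
  refine ⟨K, hK0, fun c hc G hG g hpos => ?_⟩
  have hX := isPseudometric_dist_on g
  have hY := isPseudometric_dist_on (G.F ∘ g)
  have hAX := hX.antipodalEnergy_le_edgeEnergy hp.le
  have hAY := hY.antipodalEnergy_le_edgeEnergy hp.le
  have hLipE : antipodalEnergy p (dist on G.F ∘ g) ≤ lam ^ p * edgeEnergy p (dist on g) :=
    (hLip.antipodalEnergy_le hlam (by linarith) hG g).trans (by gcongr)
  have hcE : 0 ≤ c ^ p * edgeEnergy p (dist on g) := mul_nonneg (by positivity) hX.edgeEnergy_nonneg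
  have hdefX := mul_nonneg hK0 (sub_nonneg.2 hAX)
  have hdefY := mul_nonneg hK0 (sub_nonneg.2 hAY)
  unfold extremality at hpos
  have hlargeX : θ * edgeEnergy p (dist on g) < antipodalEnergy p (dist on g) :=
    lt_of_mul_sub_lt hX.edgeEnergy_nonneg hK0 ((le_max_right _ _).trans_eq hK.symm) (by linarith)
  have hlargeY : θ * edgeEnergy p (dist on G.F ∘ g) < antipodalEnergy p (dist on G.F ∘ g) :=
    lt_of_mul_sub_lt hY.edgeEnergy_nonneg hK0 ((le_max_left _ _).trans_eq hK.symm) (by linarith)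
  have hposX := edgeScale_pos (hX.edgeEnergy_pos_of_mul_lt_antipodalEnergy hp.le hlargeX)
  have hposY := edgeScale_pos (hY.edgeEnergy_pos_of_mul_lt_antipodalEnergy hp.le hlargeY)
  refine ⟨G, hG, g, _, _, hposX, hposY,
    hX.edgeScale_mul_le_edgeScale hY (by linarith) hc (by linarith),
    hstable _ hX hlargeX, hstable _ hY hlargeY⟩

end CubeFactors

section Limit

variable {𝓕 : Set MetricMap} {p c lam : ℝ}

namespace IsLipschitzFamily

variable (hLip : IsLipschitzFamily lam 𝓕) (hlam : 0 < lam)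

include hLip hlam

lemma le_bConst_of_cubeFactors (hp : 1 ≤ p) {n : ℕ} (hn : 0 < n)
    (h : ∀ D, 1 < D → CubeFactors 𝓕 c D (Fin n)) : c ≤ bConst 𝓕 p n := by
  have : NeZero n := ⟨hn.ne'⟩
  refine le_of_forall_gt_imp_ge_of_dense fun b hb => ?_
  have hadm := hLip.isAdmissible_of_bConst_lt hlam hp hb
  have hlim : Tendsto (fun D : ℝ => b * D ^ 2) (𝓝[>] 1) (𝓝 b) := by
    have : ContinuousAt (fun D : ℝ => b * D ^ 2) 1 := by fun_prop
    simpa [ContinuousAt] using this.tendsto.mono_left nhdsWithin_le_nhds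
  refine ge_of_tendsto hlim (eventually_mem_nhdsWithin.mono fun D (hD : 1 < D) => ?_)
  exact (h D hD).le_mul_sq_of_isAdmissible hadm (by linarith)
    ((bConst_nonneg 𝓕 p n).trans hb.le) (by linarith)

lemma cConst_le_bConst (hp : 1 ≤ p) {n : ℕ} (hn : 0 < n) : cConst 𝓕 ≤ bConst 𝓕 p n := by
  rw [cConst_eq_sSup]
  exact Real.sSup_le (fun c hc => hLip.le_bConst_of_cubeFactors hlam hp hn
    fun D hD => hc.2 D hD n hn) (bConst_nonneg 𝓕 p n)

lemma cubeFactors_of_lt_limsup_bConst (hp : 1 < p) (hc : 0 < c)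
    (h : c < limsup (bConst 𝓕 p) atTop) {D : ℝ} (hD : 1 < D) (n : ℕ) (hn : 0 < n) :
    CubeFactors 𝓕 c D (Fin n) := by
  have : NeZero n := ⟨hn.ne'⟩
  obtain ⟨K, hK, hfactors⟩ :=
    hLip.exists_forall_cubeFactors_of_extremality_pos (Fin n) hlam.le hp hD
  obtain ⟨a, b, ha, haL, hLb, hab⟩ := exists_lt_lt_and_penalised_pos (by linarith : 0 < p) hc h K
  have hbdd : IsBoundedUnder (· ≤ ·) atTop (bConst 𝓕 p) :=
    isBoundedUnder_of ⟨lam, hLip.bConst_le hlam hp.le⟩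
  obtain ⟨N, hN, hN0⟩ :=
    ((eventually_lt_of_limsup_lt hLb hbdd).and (eventually_gt_atTop 0)).exists
  have : NeZero N := ⟨hN0.ne'⟩
  have hadm := hLip.isAdmissible_of_bConst_lt hlam hp.le hN
  have hbox : ¬ IsAdmissible 𝓕 p a (Fin N × Fin n × Fin N) :=
    fun hbox => (hbox.limsup_bConst_le hp.le ha).not_gt haL
  obtain ⟨G, hG, g, hg⟩ := exists_extremality_pos hp.le ha.le (ha.trans (haL.trans hLb))
    (Real.rpow_nonneg hc.le p) hK hadm hadm hab.le hbox
  exact hfactors c hc.le G hG g hg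

lemma limsup_bConst_le_cConst (hp : 1 < p) : limsup (bConst 𝓕 p) atTop ≤ cConst 𝓕 := by
  have hbdd : BddAbove
      {c : ℝ | 0 < c ∧ ∀ D : ℝ, 1 < D → ∀ n : ℕ, 0 < n → CubeFactors 𝓕 c D (Fin n)} :=
    ⟨bConst 𝓕 p 1, fun c hc => hLip.le_bConst_of_cubeFactors hlam hp.le one_pos
      fun D hD => hc.2 D hD 1 one_pos⟩
  rw [cConst_eq_sSup]
  refine le_of_forall_lt_imp_le_of_dense fun c hc => ?_
  rcases le_or_gt c 0 with hc0 | hc0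
  · exact hc0.trans (Real.sSup_nonneg fun c hc => hc.1.le)
  · exact le_csSup hbdd ⟨hc0, fun D hD n hn =>
      hLip.cubeFactors_of_lt_limsup_bConst hlam hp hc0 hc hD n hn⟩

theorem tendsto_bConst_cConst (hp : 1 < p) : Tendsto (bConst 𝓕 p) atTop (𝓝 (cConst 𝓕)) := by
  have hlower : ∀ᶠ n in atTop, cConst 𝓕 ≤ bConst 𝓕 p n :=
    (eventually_gt_atTop 0).mono fun n => hLip.cConst_le_bConst hlam hp.le
  have hbdd : IsBoundedUnder (· ≤ ·) atTop (bConst 𝓕 p) :=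
    isBoundedUnder_of ⟨lam, hLip.bConst_le hlam hp.le⟩
  exact tendsto_of_le_liminf_of_limsup_le (le_liminf_of_le hbdd.isCoboundedUnder_ge hlower)
    (hLip.limsup_bConst_le_cConst hlam hp) hbdd ⟨_, hlower⟩

end IsLipschitzFamily

end Limit

/-- Quantitative relations between `c(𝓕)` and the limsups of the subtype constants
`b_{p,n}(𝓕)` and `b_{p,2^n}(𝓕)`. -/
theorem cConst_limsup_bConst (lam : ℝ) (hlam : 0 < lam) (𝓕 : Set MetricMap)
    (hLip : ∀ G ∈ 𝓕, ∀ x y : G.X, dist (G.F x) (G.F y) ≤ lam * dist x y)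
    (p : ℝ) (hp : 1 < p) :
    cConst 𝓕 ≤ Filter.limsup (fun n : ℕ => bConst 𝓕 p n) Filter.atTop ∧
    Filter.limsup (fun n : ℕ => bConst 𝓕 p (2 ^ n)) Filter.atTop ≤ cConst 𝓕 ∧
    (2 : ℝ) ^ (1 / p - 1) * Filter.limsup (fun n : ℕ => bConst 𝓕 p n) Filter.atTop ≤
      Filter.limsup (fun n : ℕ => bConst 𝓕 p (2 ^ n)) Filter.atTop := by
  have hlim : Tendsto (fun n => bConst 𝓕 p n) atTop (𝓝 (cConst 𝓕)) :=
    IsLipschitzFamily.tendsto_bConst_cConst hLip hlam hp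
  have hlim₂ : Tendsto (fun n => bConst 𝓕 p (2 ^ n)) atTop (𝓝 (cConst 𝓕)) :=
    hlim.comp (tendsto_pow_atTop_atTop_of_one_lt one_lt_two)
  have hfactor : (2 : ℝ) ^ (1 / p - 1) ≤ 1 :=
    Real.rpow_le_one_of_one_le_of_nonpos one_le_two
      (sub_nonpos.2 ((div_le_one (by linarith)).2 hp.le))
  rw [hlim.limsup_eq, hlim₂.limsup_eq]
  exact ⟨le_rfl, le_rfl, mul_le_of_le_one_left (cConst_nonneg 𝓕) hfactor⟩
end
end

section
/- For every 1 < p < ∞, every n ∈ ℕ, and every Φ > 1, there exists φ = φ(p,n,Φ) ∈ (0,1) such that: whenever a = (a_1,…,a_n) ∈ ℝ^n satisfies (∑_{i=1}^n |a_i|)^p > φ·n^{p−1}·∑_{i=1}^n |a_i|^p, then max_{1≤i≤n} |a_i| ≤ Φ·min_{1≤i≤n} |a_i|. -/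
open Finset

noncomputable section

/-!
The condition on `a` reads `φ < holderRatio p a`. By strict convexity of `x ↦ x ^ p`, this ratio is
less than `1` at every `a` whose entries do not all have the same absolute value. It is invariant
under scaling, and the vectors with `Φ * |a j| ≤ |a i|` for some `i, j` form a closed cone, so
compactness of the unit sphere bounds the ratio on this cone away from `1`.
-/

section Cone

variable {E α : Type*} [NormedAddCommGroup E] [NormedSpace ℝ E] [ProperSpace E]
  [LinearOrder α] [TopologicalSpace α] [ClosedIciTopology α] [NoMinOrder α]

lemma exists_lt_forall_le_of_isClosed_cone {C : Set E} (hC : IsClosed C)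
    (hCsmul : ∀ c : ℝ, 0 < c → ∀ x ∈ C, c • x ∈ C) {F : E → α} (hF : ContinuousOn F {0}ᶜ)
    (hFsmul : ∀ c : ℝ, 0 < c → ∀ x, F (c • x) = F x) {M : α} (hM : ∀ x ∈ C, x ≠ 0 → F x < M) :
    ∃ m < M, ∀ x ∈ C, x ≠ 0 → F x ≤ m := by
  have sphere_ne_zero : ∀ x ∈ Metric.sphere (0 : E) 1 ∩ C, x ≠ 0 :=
    fun x hx => ne_zero_of_mem_unit_sphere ⟨x, hx.1⟩
  have hK : IsCompact (Metric.sphere (0 : E) 1 ∩ C) := (isCompact_sphere 0 1).inter_right hC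
  obtain ⟨m, hmM, hm⟩ := hK.exists_forall_le' (α := αᵒᵈ) (hF.mono sphere_ne_zero)
    fun x hx => hM x hx.2 (sphere_ne_zero x hx)
  refine ⟨m, hmM, fun x hx hx0 => ?_⟩
  have hc : 0 < ‖x‖⁻¹ := inv_pos.2 (norm_pos_iff.2 hx0)
  rw [← hFsmul _ hc x]
  exact hm _ ⟨mem_sphere_zero_iff_norm.2 (norm_smul_inv_norm (𝕜 := ℝ) hx0), hCsmul _ hc x hx⟩

end Cone

variable {ι : Type*}

lemma rpow_sum_lt_const_mul_sum_rpow_of_nonneg {s : Finset ι} {f : ι → ℝ} {p : ℝ} (hp : 1 < p)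
    (hf : ∀ i ∈ s, 0 ≤ f i) (hne : ∃ i ∈ s, ∃ j ∈ s, f i ≠ f j) :
    (∑ i ∈ s, f i) ^ p < (#s : ℝ) ^ (p - 1) * ∑ i ∈ s, f i ^ p := by
  have ⟨i, hi, _⟩ := hne
  have hs : (0 : ℝ) < #s := by exact_mod_cast card_pos.2 ⟨i, hi⟩
  have jensen : ((#s : ℝ)⁻¹ * ∑ i ∈ s, f i) ^ p < (#s : ℝ)⁻¹ * ∑ i ∈ s, f i ^ p := by
    simpa only [smul_eq_mul, ← mul_sum] using
      (strictConvexOn_rpow hp).map_sum_lt (w := fun _ => (#s : ℝ)⁻¹)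
        (fun _ _ => inv_pos.2 hs) (by simp [hs.ne']) hf hne
  rw [Real.mul_rpow (inv_nonneg.2 hs.le) (sum_nonneg hf), Real.inv_rpow hs.le,
    inv_mul_lt_iff₀ (Real.rpow_pos_of_pos hs p)] at jensen
  rwa [Real.rpow_sub_one hs.ne', div_eq_mul_inv, mul_assoc]

section HolderRatio

variable [Fintype ι] {p : ℝ} {a : ι → ℝ}

/-- The `p`-th power of the ratio between the `ℓ_1` norm of `a` and its Hölder bound
`n ^ (1 - 1 / p) * ‖a‖_{ℓ_p}`, where `n` is the number of entries. At `a = 0` this is a junk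
value. -/
def holderRatio (p : ℝ) (a : ι → ℝ) : ℝ :=
  (∑ i, |a i|) ^ p / ((Fintype.card ι : ℝ) ^ (p - 1) * ∑ i, |a i| ^ p)

lemma holderRatio_denom_pos (ha : a ≠ 0) :
    0 < (Fintype.card ι : ℝ) ^ (p - 1) * ∑ i, |a i| ^ p := by
  obtain ⟨i, hi⟩ := Function.ne_iff.1 ha
  have : Nonempty ι := ⟨i⟩
  have hsum : 0 < ∑ i, |a i| ^ p :=
    sum_pos' (fun _ _ => by positivity) ⟨i, mem_univ i, Real.rpow_pos_of_pos (abs_pos.2 hi) p⟩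
  positivity

lemma lt_holderRatio_iff (ha : a ≠ 0) {φ : ℝ} :
    φ < holderRatio p a ↔
      φ * (Fintype.card ι : ℝ) ^ (p - 1) * ∑ i, |a i| ^ p < (∑ i, |a i|) ^ p := by
  rw [holderRatio, lt_div_iff₀ (holderRatio_denom_pos ha), mul_assoc]

lemma holderRatio_smul {c : ℝ} (hc : c ≠ 0) (a : ι → ℝ) :
    holderRatio p (c • a) = holderRatio p a := by
  have hcp : |c| ^ p ≠ 0 := (Real.rpow_pos_of_pos (abs_pos.2 hc) p).ne'
  simp only [holderRatio, Pi.smul_apply, smul_eq_mul, abs_mul, ← mul_sum,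
    Real.mul_rpow (abs_nonneg _) (abs_nonneg _),
    Real.mul_rpow (abs_nonneg _) (sum_nonneg fun i _ => abs_nonneg (a i))]
  rw [mul_left_comm, mul_div_mul_left _ _ hcp]

lemma continuousOn_holderRatio (hp : 0 ≤ p) :
    ContinuousOn (holderRatio p : (ι → ℝ) → ℝ) {0}ᶜ := by
  refine ContinuousOn.div ?_ ?_ fun a ha => (holderRatio_denom_pos ha).ne' <;>
    fun_prop (disch := exact hp)

lemma holderRatio_lt_one (hp : 1 < p) {i j : ι} (hij : |a i| ≠ |a j|) : holderRatio p a < 1 := by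
  have ha : a ≠ 0 := by
    rintro rfl
    exact hij rfl
  rw [holderRatio, div_lt_one (holderRatio_denom_pos ha)]
  exact rpow_sum_lt_const_mul_sum_rpow_of_nonneg hp (fun k _ => abs_nonneg (a k))
    ⟨i, mem_univ i, j, mem_univ j, hij⟩

end HolderRatio

/-- The cone of vectors having two entries whose absolute values differ by a factor at
least `Φ`. The indices may coincide, so every vector with a zero entry belongs to it. -/
def nonflatCone (ι : Type*) (Φ : ℝ) : Set (ι → ℝ) :=
  {a | ∃ i j, Φ * |a j| ≤ |a i|}

lemma isClosed_nonflatCone [Finite ι] (Φ : ℝ) : IsClosed (nonflatCone ι Φ) := by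
  simp only [nonflatCone, Set.ofPred_exists]
  exact isClosed_iUnion_of_finite fun i => isClosed_iUnion_of_finite fun j =>
    isClosed_le (by fun_prop) (by fun_prop)

lemma smul_mem_nonflatCone {Φ : ℝ} {a : ι → ℝ} (ha : a ∈ nonflatCone ι Φ) (c : ℝ) :
    c • a ∈ nonflatCone ι Φ := by
  obtain ⟨i, j, hij⟩ := ha
  refine ⟨i, j, ?_⟩
  simpa only [Pi.smul_apply, smul_eq_mul, abs_mul, mul_left_comm Φ] using
    mul_le_mul_of_nonneg_left hij (abs_nonneg c)

lemma exists_abs_ne_abs_of_mem_nonflatCone {Φ : ℝ} (hΦ : 1 < Φ) {a : ι → ℝ}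
    (ha : a ∈ nonflatCone ι Φ) (ha0 : a ≠ 0) : ∃ i j, |a i| ≠ |a j| := by
  by_contra! hconst
  obtain ⟨i, j, hij⟩ := ha
  obtain ⟨k, hk⟩ := Function.ne_iff.1 ha0
  have hpos : 0 < |a j| := hconst k j ▸ abs_pos.2 hk
  exact (lt_mul_of_one_lt_left hpos hΦ).not_ge (hconst i j ▸ hij)

theorem flat_lemma_general [Fintype ι] {p : ℝ} (hp : 1 < p) {Φ : ℝ} (hΦ : 1 < Φ) :
    ∃ φ : ℝ, 0 < φ ∧ φ < 1 ∧
      ∀ a : ι → ℝ,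
        φ * (Fintype.card ι : ℝ) ^ (p - 1) * ∑ i, |a i| ^ p < (∑ i, |a i|) ^ p →
        ∀ i j : ι, |a i| < Φ * |a j| := by
  have hp0 : 0 < p := one_pos.trans hp
  obtain ⟨m, hm1, hm⟩ := exists_lt_forall_le_of_isClosed_cone (isClosed_nonflatCone (ι := ι) Φ)
    (fun c _ _ ha => smul_mem_nonflatCone ha c) (continuousOn_holderRatio hp0.le)
    (fun _ hc => holderRatio_smul hc.ne') fun _ ha ha0 =>
      let ⟨_, _, hij⟩ := exists_abs_ne_abs_of_mem_nonflatCone hΦ ha ha0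
      holderRatio_lt_one hp hij
  obtain ⟨φ, hφ, hφ1⟩ := exists_between (max_lt one_pos hm1)
  obtain ⟨hφ0, hmφ⟩ := max_lt_iff.1 hφ
  refine ⟨φ, hφ0, hφ1, fun a ha i j => ?_⟩
  have ha0 : a ≠ 0 := by
    rintro rfl
    simp [Real.zero_rpow hp0.ne'] at ha
  by_contra! hij
  exact (hmφ.trans ((lt_holderRatio_iff ha0).2 ha)).not_ge (hm a ⟨i, j, hij⟩ ha0)

/-- Lemma 3.1 ("flat" lemma): a vector in `ℝ^n` whose `ℓ_1` norm nearly attains the extremal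
bound `n^{1−1/p}‖a‖_{ℓ_p}` must be nearly flat: `max_i |a_i| ≤ Φ·min_i |a_i|`. -/
theorem flat_lemma (p : ℝ) (hp : 1 < p) (n : ℕ) (hn : 0 < n) (Φ : ℝ) (hΦ : 1 < Φ) :
    ∃ φ : ℝ, 0 < φ ∧ φ < 1 ∧
      ∀ a : Fin n → ℝ,
        (∑ i, |a i|) ^ p > φ * (n : ℝ) ^ (p - 1) * ∑ i, |a i| ^ p →
        ∀ i j : Fin n, |a i| ≤ Φ * |a j| := by
  obtain ⟨φ, hφ0, hφ1, hφ⟩ := flat_lemma_general (ι := Fin n) hp hΦ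
  exact ⟨φ, hφ0, hφ1, fun a ha i j => (hφ a (by rwa [Fintype.card_fin]) i j).le⟩
end
end

section
/- Fix 1 < p < ∞. Let (Ω, 𝒜, ℙ) be a probability space, let D_Y, D_X, E_Y, E_X : Ω → [0,∞) be measurable functions with E_X integrable, let λ, Θ > 0 and a, b, ν, μ ∈ (0,1), and assume: (i) pointwise everywhere on Ω: D_Y ≤ E_Y, D_X ≤ E_X, D_Y ≤ λ^p·D_X, E_Y ≤ λ^p·E_X, and D_Y ≤ (1+ν)Θ^p·E_X; (ii) 𝔼D_Y > (1−ν)Θ^p·𝔼E_X, 𝔼D_Y > (1−μ)·𝔼E_Y, and 𝔼D_X > (1−μ)·𝔼E_X; (iii) λ^p(2μ/a + 2ν/b) < Θ^p(1−ν). Then there exists ω ∈ Ω such that D_Y(ω) > (1−a)·E_Y(ω), D_X(ω) > (1−a)·E_X(ω), and D_Y(ω) > (1−b)Θ^p·E_X(ω). -/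
/-!
Write `L = λ ^ p` and `T = Θ ^ p`. Each of the three conclusions at `ω` follows once `DY ω` exceeds
a suitable multiple of the corresponding nonnegative defect, `EY - DY`, `EX - DX` or
`(1 + ν) T EX - DY`, because `DY ≤ EY ≤ L EX`. The expectation hypotheses say that the integrals of
these multiples sum to at most `L (2 μ / a + 2 ν / b) 𝔼 EX ≤ (1 - ν) T 𝔼 EX`, which is less than
`𝔼 DY`, so `DY` cannot be dominated almost everywhere by the sum of the three multiples.
-/

open MeasureTheory

noncomputable section

section

variable {Ω : Type*} [MeasurableSpace Ω] {P : Measure Ω}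

theorem frequently_forall_lt_of_sum_integral_lt {ι : Type*} [Fintype ι] {f : Ω → ℝ}
    {u : ι → Ω → ℝ} (hf : Integrable f P) (hu : ∀ i, Integrable (u i) P)
    (hu_nonneg : ∀ i, 0 ≤ᵐ[P] u i) (h : ∑ i, ∫ ω, u i ω ∂P < ∫ ω, f ω ∂P) :
    ∃ᶠ ω in ae P, ∀ i, u i ω < f ω := by
  intro hfail
  refine h.not_ge ?_
  rw [← integral_finsetSum _ fun i _ => hu i]
  refine integral_mono_ae hf (integrable_finsetSum _ fun i _ => hu i) ?_
  filter_upwards [hfail, ae_all_iff.2 hu_nonneg] with ω hω hnonneg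
  obtain ⟨i, hi⟩ := not_forall.1 hω
  exact (not_lt.1 hi).trans
    (Finset.single_le_sum (f := fun j => u j ω) (fun j _ => hnonneg j) (Finset.mem_univ i))

theorem one_sub_mul_lt_of_mul_sub_lt {a c w x y z : ℝ} (ha : 0 < a) (hc : 0 < c) (hyz : y ≤ z)
    (hw : c / a * (z - x) < w) (hwy : w ≤ c * y) : (1 - a) * y < x := by
  have hdefect : c * (z - x) < c * (a * y) := by
    calc
      c * (z - x) = a * (c / a * (z - x)) := by field_simp
      _ < a * (c * y) := mul_lt_mul_of_pos_left (hw.trans_le hwy) ha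
      _ = c * (a * y) := mul_left_comm a c y
  linarith [lt_of_mul_lt_mul_left hdefect hc.le]

theorem sum_weighted_defects_lt {a b ν μ L T dY dX eY eX : ℝ} (ha : 0 < a) (hb : 0 < b)
    (hμ : 0 ≤ μ) (hL : 0 < L) (hT : 0 < T) (heX : 0 ≤ eX) (hYX : eY ≤ L * eX)
    (hDYEX : (1 - ν) * T * eX < dY) (hDYEY : (1 - μ) * eY ≤ dY) (hDXEX : (1 - μ) * eX ≤ dX)
    (hparam : L * (2 * μ / a + 2 * ν / b) ≤ T * (1 - ν)) :
    1 / a * (eY - dY) + L / a * (eX - dX) + L / T / b * ((1 + ν) * T * eX - dY) < dY := by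
  have hdefectY : eY - dY ≤ μ * (L * eX) := by linarith [mul_le_mul_of_nonneg_left hYX hμ]
  have hdefectX : eX - dX ≤ μ * eX := by linarith
  have hdefectYX : (1 + ν) * T * eX - dY ≤ 2 * ν * T * eX := by linarith
  calc
    _ ≤ 1 / a * (μ * (L * eX)) + L / a * (μ * eX) + L / T / b * (2 * ν * T * eX) := by gcongr
    _ = L * (2 * μ / a + 2 * ν / b) * eX := by
      field_simp
      ring
    _ ≤ T * (1 - ν) * eX := by gcongr
    _ < dY := by rwa [mul_comm T]

theorem expect_lemma_general {DY DX EY EX : Ω → ℝ}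
    (hDY : Integrable DY P) (hDX : Integrable DX P)
    (hEY : Integrable EY P) (hEX : Integrable EX P) (hEX_nonneg : 0 ≤ᵐ[P] EX)
    {L T a b ν μ : ℝ} (hL : 0 < L) (hT : 0 < T) (ha : 0 < a) (hb : 0 < b)
    (hν : 0 ≤ ν) (hμ : 0 ≤ μ)
    (hDYEY : ∀ᵐ ω ∂P, DY ω ≤ EY ω) (hDXEX : ∀ᵐ ω ∂P, DX ω ≤ EX ω)
    (hEYEX : ∀ᵐ ω ∂P, EY ω ≤ L * EX ω) (hDYEX : ∀ᵐ ω ∂P, DY ω ≤ (1 + ν) * T * EX ω)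
    (hintDYEX : (1 - ν) * T * ∫ ω, EX ω ∂P < ∫ ω, DY ω ∂P)
    (hintDYEY : (1 - μ) * ∫ ω, EY ω ∂P ≤ ∫ ω, DY ω ∂P)
    (hintDXEX : (1 - μ) * ∫ ω, EX ω ∂P ≤ ∫ ω, DX ω ∂P)
    (hparam : L * (2 * μ / a + 2 * ν / b) ≤ T * (1 - ν)) :
    ∃ᶠ ω in ae P, (1 - a) * EY ω < DY ω ∧ (1 - a) * EX ω < DX ω ∧
      (1 - b) * T * EX ω < DY ω := by
  let defect : Fin 3 → Ω → ℝ := ![fun ω => 1 / a * (EY ω - DY ω),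
    fun ω => L / a * (EX ω - DX ω), fun ω => L / T / b * ((1 + ν) * T * EX ω - DY ω)]
  have hdefect : ∀ i, Integrable (defect i) P := by
    intro i
    fin_cases i
    exacts [(hEY.sub hDY).const_mul _, (hEX.sub hDX).const_mul _,
      ((hEX.const_mul _).sub hDY).const_mul _]
  have hdefect_nonneg : ∀ i, 0 ≤ᵐ[P] defect i := by
    intro i
    fin_cases i
    · exact hDYEY.mono fun ω h => mul_nonneg (by positivity) (sub_nonneg.2 h)
    · exact hDXEX.mono fun ω h => mul_nonneg (by positivity) (sub_nonneg.2 h)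
    · exact hDYEX.mono fun ω h => mul_nonneg (by positivity) (sub_nonneg.2 h)
  have hsum : ∑ i, ∫ ω, defect i ω ∂P < ∫ ω, DY ω ∂P := by
    have hintEYEX : ∫ ω, EY ω ∂P ≤ L * ∫ ω, EX ω ∂P := by
      rw [← integral_const_mul]
      exact integral_mono_ae hEY (hEX.const_mul L) hEYEX
    simpa only [Fin.sum_univ_three, defect, Matrix.cons_val, integral_const_mul,
      integral_sub hEY hDY, integral_sub hEX hDX, integral_sub (hEX.const_mul _) hDY] using
      sum_weighted_defects_lt ha hb hμ hL hT (integral_nonneg_of_ae hEX_nonneg) hintEYEX hintDYEX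
        hintDYEY hintDXEX hparam
  have hlt := frequently_forall_lt_of_sum_integral_lt hDY hdefect hdefect_nonneg hsum
  refine (hlt.and_eventually (hEX_nonneg.and (hDYEY.and hEYEX))).mono ?_
  rintro ω ⟨hω, hEX0, hDY_le_EY, hEY_le_EX⟩
  have hDY_le_EX : DY ω ≤ L * EX ω := hDY_le_EY.trans hEY_le_EX
  have hTEX : T * EX ω ≤ (1 + ν) * T * EX ω := by
    linarith [mul_nonneg hν (mul_nonneg hT.le hEX0)]
  refine ⟨one_sub_mul_lt_of_mul_sub_lt ha one_pos le_rfl (hω 0) (by rwa [one_mul]),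
    one_sub_mul_lt_of_mul_sub_lt ha hL le_rfl (hω 1) hDY_le_EX, ?_⟩
  rw [mul_assoc]
  refine one_sub_mul_lt_of_mul_sub_lt hb (div_pos hL hT) hTEX (hω 2) ?_
  rwa [← mul_assoc, div_mul_cancel₀ L hT.ne']

end

/-- Lemma 3.2: existence of a point where all three expectational inequalities localize. -/
theorem expect_lemma (p : ℝ) (hp : 1 < p)
    {Ω : Type} [MeasurableSpace Ω] (P : Measure Ω) [IsProbabilityMeasure P]
    (DY DX EY EX : Ω → ℝ)
    (hDYm : Measurable DY) (hDXm : Measurable DX)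
    (hEYm : Measurable EY) (hEXm : Measurable EX)
    (hEXint : Integrable EX P)
    (hDY0 : ∀ ω, 0 ≤ DY ω) (hDX0 : ∀ ω, 0 ≤ DX ω)
    (hEY0 : ∀ ω, 0 ≤ EY ω) (hEX0 : ∀ ω, 0 ≤ EX ω)
    (lam Θ : ℝ) (hlam : 0 < lam) (hΘ : 0 < Θ)
    (a b ν μ : ℝ) (ha : 0 < a) (ha1 : a < 1) (hb : 0 < b) (hb1 : b < 1)
    (hν : 0 < ν) (hν1 : ν < 1) (hμ : 0 < μ) (hμ1 : μ < 1)
    (h1 : ∀ ω, DY ω ≤ EY ω) (h2 : ∀ ω, DX ω ≤ EX ω)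
    (h3 : ∀ ω, DY ω ≤ lam ^ p * DX ω) (h4 : ∀ ω, EY ω ≤ lam ^ p * EX ω)
    (h5 : ∀ ω, DY ω ≤ (1 + ν) * Θ ^ p * EX ω)
    (h6 : (∫ ω, DY ω ∂P) > (1 - ν) * Θ ^ p * ∫ ω, EX ω ∂P)
    (h7 : (∫ ω, DY ω ∂P) > (1 - μ) * ∫ ω, EY ω ∂P)
    (h8 : (∫ ω, DX ω ∂P) > (1 - μ) * ∫ ω, EX ω ∂P)
    (h9 : lam ^ p * (2 * μ / a + 2 * ν / b) < Θ ^ p * (1 - ν)) :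
    ∃ ω : Ω, DY ω > (1 - a) * EY ω ∧ DX ω > (1 - a) * EX ω ∧
      DY ω > (1 - b) * Θ ^ p * EX ω := by
  have hEYint := (hEXint.const_mul (lam ^ p)).mono_nonneg hEYm.aestronglyMeasurable
    (.of_forall hEY0) (.of_forall h4)
  exact (expect_lemma_general
    (hEYint.mono_nonneg hDYm.aestronglyMeasurable (.of_forall hDY0) (.of_forall h1))
    (hEXint.mono_nonneg hDXm.aestronglyMeasurable (.of_forall hDX0) (.of_forall h2))
    hEYint hEXint (.of_forall hEX0) (Real.rpow_pos_of_pos hlam p) (Real.rpow_pos_of_pos hΘ p)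
    ha hb hν.le hμ.le (.of_forall h1) (.of_forall h2) (.of_forall h4) (.of_forall h5)
    h6 h7.le h8.le h9.le).exists
end
end
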